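/- arXiv:quant-ph/0503114 — 3 statements merged into one kernel-verified Lean document; each statement's English description precedes it below -/
import Mathlib

section
/- Let G be a finite group and H₁, H₂ ≤ G subgroups whose normal cores differ: core(H₁) ≠ core(H₂), where core(H) is the largest normal subgroup of G contained in H. Let (ρ_i)_{i ∈ ι} be a finite family of pairwise non-isomorphic irreducible finite-dimensional complex representations of G such that every irreducible finite-dimensional complex representation of G is isomorphic to some ρ_i, with ρ_i acting on V_i. Then ∑_{i ∈ ι} (dim V_i / |G|) · | |H₁| · dim(V_i^{H₁}) − |H₂| · dim(V_i^{H₂}) | ≥ 1/2, where V_i^{H} := {v ∈ V_i : ρ_i(h)v = v for all h ∈ H}. -/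
/-- The subspace `V^H` of vectors fixed by `ρ(h)` for every `h` in the subgroup `H`. -/
def fixedSub {G : Type} [Group G] {V : Type} [AddCommGroup V] [Module ℂ V]
    (ρ : Representation ℂ G V) (H : Subgroup G) : Submodule ℂ V where
  carrier := {v | ∀ h ∈ H, ρ h v = v}
  zero_mem' := fun h _ => map_zero (ρ h)
  add_mem' := fun {a b} ha hb h hh => by
    rw [map_add, ha h hh, hb h hh]
  smul_mem' := fun c a ha h hh => by
    rw [map_smul, ha h hh]

open Representation

namespace WFS

/-- Intertwiners out of a direct sum of two complementary subrepresentations. -/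
lemma finrank_split {G : Type} [Group G] {W V : Type} [AddCommGroup W] [Module ℂ W]
    [FiniteDimensional ℂ W] [AddCommGroup V] [Module ℂ V] [FiniteDimensional ℂ V]
    (π : Representation ℂ G W) (σ : Representation ℂ G V)
    (A B : Subrepresentation π) (h : IsCompl A.toSubmodule B.toSubmodule) :
    Module.finrank ℂ (IntertwiningMap π σ) =
      Module.finrank ℂ (IntertwiningMap A.toRepresentation σ) +
      Module.finrank ℂ (IntertwiningMap B.toRepresentation σ) := by
  rw [← Module.finrank_prod]
  let incl : ∀ C : Subrepresentation π, IntertwiningMap C.toRepresentation π := fun C =>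
    ⟨C.toSubmodule.subtype, fun g => by ext v; rfl⟩
  let F : IntertwiningMap π σ →ₗ[ℂ]
      IntertwiningMap A.toRepresentation σ × IntertwiningMap B.toRepresentation σ :=
    { toFun := fun f => (f.comp (incl A), f.comp (incl B))
      map_add' := fun f g => rfl
      map_smul' := fun c f => rfl }
  have key : ∀ w : W, ∃ a : A.toSubmodule, ∃ b : B.toSubmodule, (a : W) + (b : W) = w := by
    intro w
    have : w ∈ A.toSubmodule ⊔ B.toSubmodule := by rw [h.sup_eq_top]; trivial
    obtain ⟨a, ha, b, hb, hab⟩ := Submodule.mem_sup.1 this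
    exact ⟨⟨a, ha⟩, ⟨b, hb⟩, hab⟩
  refine (LinearEquiv.ofBijective F ⟨?_, ?_⟩).finrank_eq
  · rw [← LinearMap.ker_eq_bot, LinearMap.ker_eq_bot']
    intro f hf
    have h1 : ∀ a : A.toSubmodule, f (a : W) = 0 := fun a =>
      DFunLike.congr_fun (congrArg Prod.fst hf) a
    have h2 : ∀ b : B.toSubmodule, f (b : W) = 0 := fun b =>
      DFunLike.congr_fun (congrArg Prod.snd hf) b
    apply DFunLike.ext
    intro w
    obtain ⟨a, b, rfl⟩ := key w
    rw [map_add, h1, h2]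
    simp
  · rintro ⟨p, q⟩
    let l : W →ₗ[ℂ] V := LinearMap.ofIsCompl h p.toLinearMap q.toLinearMap
    have hl1 : ∀ a : A.toSubmodule, l (a : W) = p a := fun a =>
      LinearMap.ofIsCompl_apply_left h a
    have hl2 : ∀ b : B.toSubmodule, l (b : W) = q b := fun b =>
      LinearMap.ofIsCompl_apply_right h b
    refine ⟨⟨l, ?_⟩, ?_⟩
    · intro g
      ext w
      obtain ⟨a, b, rfl⟩ := key w
      have e1 : π g (a : W) = ((A.toRepresentation g a : A.toSubmodule) : W) := rfl
      have e2 : π g (b : W) = ((B.toRepresentation g b : B.toSubmodule) : W) := rfl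
      simp only [LinearMap.comp_apply, map_add]
      rw [e1, e2, hl1, hl2, hl1, hl2, p.isIntertwining, q.isIntertwining]
    · refine Prod.ext ?_ ?_
      · apply DFunLike.ext
        exact hl1
      · apply DFunLike.ext
        exact hl2

lemma irr_of {G : Type} [Group G] {V : Type} [AddCommGroup V] [Module ℂ V]
    (σ : Representation ℂ G V) (hn : Nontrivial V)
    (h : ∀ W : Submodule ℂ V, (∀ g : G, ∀ v ∈ W, σ g v ∈ W) → W = ⊥ ∨ W = ⊤) :
    IsIrreducible σ := by
  have : Nontrivial (Subrepresentation σ) :=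
    ⟨⊥, ⊤, fun e => bot_ne_top (α := Submodule ℂ V)
      (congrArg Subrepresentation.toSubmodule e)⟩
  refine ⟨fun U => ?_⟩
  rcases h U.toSubmodule (fun g v hv => U.apply_mem_toSubmodule g hv) with h | h
  · left; exact Subrepresentation.toSubmodule_injective h
  · right; exact Subrepresentation.toSubmodule_injective h

section fam
variable {G : Type} [Group G] [Finite G] {ι : Type} [Fintype ι] {V : ι → Type}
    [∀ i, AddCommGroup (V i)] [∀ i, Module ℂ (V i)] [∀ i, FiniteDimensional ℂ (V i)]
    (ρ : ∀ i, Representation ℂ G (V i))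

lemma dim_eq
    (hnontriv : ∀ i, Nontrivial (V i))
    (hirr : ∀ i, ∀ W : Submodule ℂ (V i),
      (∀ g : G, ∀ v ∈ W, ρ i g v ∈ W) → W = ⊥ ∨ W = ⊤)
    (hpairwise : ∀ i i', i ≠ i' →
      ¬∃ e : V i ≃ₗ[ℂ] V i', ∀ (g : G) (v : V i), e (ρ i g v) = ρ i' g (e v))
    (hcomplete : ∀ (W : Type) [AddCommGroup W] [Module ℂ W] [FiniteDimensional ℂ W],
      ∀ π : Representation ℂ G W, Nontrivial W →
        (∀ U : Submodule ℂ W, (∀ g : G, ∀ v ∈ U, π g v ∈ U) → U = ⊥ ∨ U = ⊤) →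
        ∃ i, ∃ e : W ≃ₗ[ℂ] V i, ∀ (g : G) (v : W), e (π g v) = ρ i g (e v))
    (n : ℕ) : ∀ (W : Type) [AddCommGroup W] [Module ℂ W] [FiniteDimensional ℂ W]
    (π : Representation ℂ G W), Module.finrank ℂ W = n →
    Module.finrank ℂ W =
      ∑ i, Module.finrank ℂ (V i) * Module.finrank ℂ (IntertwiningMap π (ρ i)) := by
  classical
  induction n using Nat.strong_induction_on with
  | _ n ih =>
  intro W _ _ _ π hn
  rcases subsingleton_or_nontrivial W with hW | hW
  · rw [Module.finrank_zero_of_subsingleton, Finset.sum_eq_zero]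
    intro i _
    have : Subsingleton (IntertwiningMap π (ρ i)) := ⟨fun f g => by
      apply DFunLike.ext
      intro w
      rw [Subsingleton.elim w 0, map_zero, map_zero]⟩
    rw [Module.finrank_zero_of_subsingleton (M := IntertwiningMap π (ρ i)), mul_zero]
  by_cases hI : ∀ U : Submodule ℂ W, (∀ g : G, ∀ v ∈ U, π g v ∈ U) → U = ⊥ ∨ U = ⊤
  · obtain ⟨i, e, he⟩ := hcomplete W π hW hI
    have hπ : IsIrreducible π := irr_of π hW hI
    rw [Finset.sum_eq_single i]
    · have h1 : Module.finrank ℂ (IntertwiningMap π (ρ i)) =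
          Module.finrank ℂ (IntertwiningMap π π) := by
        refine (LinearEquiv.finrank_eq (M := IntertwiningMap π π) ?_).symm
        let E : IntertwiningMap π (ρ i) := ⟨e.toLinearMap, fun g => by ext v; exact he g v⟩
        let F : IntertwiningMap π π →ₗ[ℂ] IntertwiningMap π (ρ i) :=
          { toFun := fun f => E.comp f
            map_add' := fun f g => by apply DFunLike.ext; intro w; exact map_add e _ _
            map_smul' := fun c f => by apply DFunLike.ext; intro w; exact map_smul e _ _ }
        refine LinearEquiv.ofBijective F ⟨?_, ?_⟩
        · intro f g hfg
          apply DFunLike.ext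
          intro w
          exact e.injective (DFunLike.congr_fun hfg w)
        · intro f
          refine ⟨⟨e.symm.toLinearMap ∘ₗ f.toLinearMap, ?_⟩, ?_⟩
          · intro g
            ext w
            apply e.injective
            simp [he, IntertwiningMap.isIntertwining]
          · apply DFunLike.ext
            intro w
            exact e.apply_symm_apply _
      rw [h1, IsIrreducible.finrank_intertwiningMap_self, mul_one, e.finrank_eq]
    · intro j _ hj
      have : IsIrreducible (ρ j) := irr_of (ρ j) (hnontriv j) (hirr j)
      have : IsEmpty (Representation.Equiv π (ρ j)) := ⟨fun φ => by
        refine hpairwise i j hj.symm ⟨e.symm.trans φ.toLinearEquiv, fun g v => ?_⟩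
        have h1 : e.symm (ρ i g v) = π g (e.symm v) := by
          apply e.injective; simp [he]
        simp only [LinearEquiv.trans_apply, h1]
        exact IntertwiningMap.isIntertwining _ _ φ.toIntertwiningMap g _⟩
      rw [Module.finrank_zero_of_subsingleton (M := IntertwiningMap π (ρ j)), mul_zero]
    · simp
  · push Not at hI
    obtain ⟨U, hU, hb, ht⟩ := hI
    let A : Subrepresentation π := ⟨U, fun g v hv => hU g v hv⟩
    have : NeZero (Nat.card G : ℂ) := ⟨by exact_mod_cast Nat.card_pos.ne'⟩
    have : IsSemisimpleRepresentation π := inferInstance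
    obtain ⟨B, hB⟩ := exists_isCompl A
    have hc : IsCompl A.toSubmodule B.toSubmodule := by
      refine IsCompl.of_eq ?_ ?_
      · exact congrArg Subrepresentation.toSubmodule hB.inf_eq_bot
      · exact congrArg Subrepresentation.toSubmodule hB.sup_eq_top
    have hadd := Submodule.finrank_add_eq_of_isCompl hc
    have hA : Module.finrank ℂ A.toSubmodule < n := hn ▸ Submodule.finrank_lt ht
    have hA0 : 0 < Module.finrank ℂ A.toSubmodule := by
      have : Nontrivial A.toSubmodule := Submodule.nontrivial_iff_ne_bot.2 hb
      exact Module.finrank_pos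
    have e1 := ih _ hA A.toSubmodule A.toRepresentation rfl
    have e2 := ih _ (by omega) B.toSubmodule B.toRepresentation rfl
    rw [← hadd, e1, e2, ← Finset.sum_add_distrib]
    refine Finset.sum_congr rfl fun i _ => ?_
    rw [finrank_split π (ρ i) A B hc, mul_add]

end fam

/-- The permutation representation on `G ⧸ H`. -/
noncomputable def permRep {G : Type} [Group G] (H : Subgroup G) :
    Representation ℂ G ((G ⧸ H) →₀ ℂ) where
  toFun g := Finsupp.lmapDomain ℂ ℂ (g • ·)
  map_one' := by ext; simp
  map_mul' x y := by
    apply Finsupp.lhom_ext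
    intro a b
    simp [mul_smul]

lemma permRep_single {G : Type} [Group G] (H : Subgroup G) (g : G) (q : G ⧸ H) (c : ℂ) :
    permRep H g (Finsupp.single q c) = Finsupp.single (g • q) c := by
  simp [permRep]

lemma finrank_hom {G : Type} [Group G] [Finite G] (H : Subgroup G) {V : Type} [AddCommGroup V]
    [Module ℂ V] (σ : Representation ℂ G V) :
    Module.finrank ℂ (IntertwiningMap (permRep H) σ) = Module.finrank ℂ (fixedSub σ H) := by
  let F : IntertwiningMap (permRep H) σ →ₗ[ℂ] fixedSub σ H :=
    { toFun := fun f => ⟨f (Finsupp.single ((1 : G) : G ⧸ H) 1), fun h hh => by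
        rw [← f.isIntertwining, permRep_single]
        congr 2
        rw [MulAction.Quotient.smul_coe, QuotientGroup.eq]
        simpa using hh⟩
      map_add' := fun f g => rfl
      map_smul' := fun c f => rfl }
  refine (LinearEquiv.ofBijective F ⟨?_, ?_⟩).finrank_eq
  · intro f f' hff
    have h0 : f (Finsupp.single ((1 : G) : G ⧸ H) 1) = f' (Finsupp.single ((1 : G) : G ⧸ H) 1) :=
      congrArg Subtype.val hff
    apply IntertwiningMap.ext
    apply Finsupp.lhom_ext'
    intro q
    apply LinearMap.ext_ring
    induction q using QuotientGroup.induction_on with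
    | H g =>
      have : (Finsupp.single (g : G ⧸ H) (1 : ℂ)) =
          permRep H g (Finsupp.single ((1 : G) : G ⧸ H) 1) := by
        rw [permRep_single, MulAction.Quotient.smul_coe, smul_eq_mul, mul_one]
      change f (Finsupp.single (g : G ⧸ H) (1 : ℂ)) = f' (Finsupp.single (g : G ⧸ H) (1 : ℂ))
      rw [this, f.isIntertwining, f'.isIntertwining, h0]
  · rintro ⟨v, hv⟩
    let φ : G ⧸ H → V := Quotient.lift (fun g => σ g v) (fun a b hab => by
      have h : a⁻¹ * b ∈ H := QuotientGroup.leftRel_apply.1 hab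
      have h2 := hv _ h
      change σ a v = σ b v
      conv_lhs => rw [← h2]
      rw [← Module.End.mul_apply, ← map_mul, mul_inv_cancel_left])
    refine ⟨⟨Finsupp.linearCombination ℂ φ, ?_⟩, ?_⟩
    · intro g
      apply Finsupp.lhom_ext'
      intro q
      apply LinearMap.ext_ring
      induction q using QuotientGroup.induction_on with
      | H x =>
        simp only [LinearMap.comp_apply, Finsupp.lsingle_apply, permRep_single,
          Finsupp.linearCombination_single, one_smul]
        change σ (g * x) v = σ g (σ x v)
        rw [map_mul, Module.End.mul_apply]
    · apply Subtype.ext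
      change Finsupp.linearCombination ℂ φ (Finsupp.single ((1 : G) : G ⧸ H) 1) = v
      rw [Finsupp.linearCombination_single, one_smul]
      change σ 1 v = v
      simp

section fam
variable {G : Type} [Group G] [Finite G] {ι : Type} [Fintype ι] {V : ι → Type}
    [∀ i, AddCommGroup (V i)] [∀ i, Module ℂ (V i)] [∀ i, FiniteDimensional ℂ (V i)]
    (ρ : ∀ i, Representation ℂ G (V i))

lemma key (hirr : ∀ i, ∀ W : Submodule ℂ (V i),
      (∀ g : G, ∀ v ∈ W, ρ i g v ∈ W) → W = ⊥ ∨ W = ⊤)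
    (hN : ∀ H : Subgroup G, (∑ i, (Module.finrank ℂ (V i) : ℝ) *
      Module.finrank ℂ (fixedSub (ρ i) H)) * Nat.card H = Nat.card G)
    (H₁ H₂ K : Subgroup G) [K.Normal] (h1 : K ≤ H₁) (h2 : ¬ K ≤ H₂) :
    (1 : ℝ) / 2 ≤
      ∑ i, (Module.finrank ℂ (V i) : ℝ) / (Nat.card G) *
        |(Nat.card H₁ : ℝ) * (Module.finrank ℂ (fixedSub (ρ i) H₁)) -
          (Nat.card H₂ : ℝ) * (Module.finrank ℂ (fixedSub (ρ i) H₂))| := by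
  classical
  have hG : (0 : ℝ) < Nat.card G := by exact_mod_cast Nat.card_pos
  let E : Finset ι := Finset.univ.filter fun i => ∀ k ∈ K, ∀ v, ρ i k v = v
  have hoff : ∀ i, i ∉ E → Module.finrank ℂ (fixedSub (ρ i) H₁) = 0 := by
    intro i hi
    have hK : fixedSub (ρ i) K = ⊥ := by
      refine (hirr i (fixedSub (ρ i) K) ?_).resolve_right ?_
      · intro g v hv k hk
        have := hv (g⁻¹ * k * g) (by
          simpa using (inferInstance : K.Normal).conj_mem k hk g⁻¹)
        conv_rhs => rw [← this]
        rw [← Module.End.mul_apply, ← Module.End.mul_apply, ← map_mul, ← map_mul]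
        congr 2
        group
      · intro ht
        apply hi
        simp only [E, Finset.mem_filter, Finset.mem_univ, true_and]
        intro k hk v
        have : v ∈ fixedSub (ρ i) K := ht ▸ Submodule.mem_top
        exact this k hk
    have : fixedSub (ρ i) H₁ = ⊥ := by
      rw [eq_bot_iff, ← hK]
      exact fun v hv k hk => hv k (h1 hk)
    rw [this, finrank_bot]
  have hon : ∀ i ∈ E, fixedSub (ρ i) H₂ = fixedSub (ρ i) (H₂ ⊔ K) := by
    intro i hi
    simp only [E, Finset.mem_filter, Finset.mem_univ, true_and] at hi
    apply le_antisymm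
    · intro v hv x hx
      obtain ⟨h, hh, k, hk, rfl⟩ := Subgroup.mem_sup_of_normal_right.1 hx
      rw [map_mul, Module.End.mul_apply, hi k hk, hv h hh]
    · exact fun v hv h hh => hv h (le_sup_left (a := H₂) hh)
  have hcard : 2 * Nat.card H₂ ≤ Nat.card (H₂ ⊔ K : Subgroup G) := by
    have hle : H₂ ≤ H₂ ⊔ K := le_sup_left
    obtain ⟨c, hc⟩ := Subgroup.card_dvd_of_le hle
    have hpos : 0 < Nat.card (H₂ ⊔ K : Subgroup G) := Nat.card_pos
    have hc0 : c ≠ 0 := by rintro rfl; omega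
    have hc1 : c ≠ 1 := by
      rintro rfl
      have : H₂ = H₂ ⊔ K := Subgroup.eq_of_le_of_card_ge hle (by omega)
      exact h2 (this ▸ le_sup_right)
    rw [hc, mul_comm]
    exact Nat.mul_le_mul_left _ (by omega)
  have hcard' : (2 : ℝ) * Nat.card H₂ ≤ Nat.card (H₂ ⊔ K : Subgroup G) := by exact_mod_cast hcard
  set S₁ : ℝ := ∑ i ∈ E, (Module.finrank ℂ (V i) : ℝ) * Module.finrank ℂ (fixedSub (ρ i) H₁)
    with hS₁
  set S₂ : ℝ := ∑ i ∈ E, (Module.finrank ℂ (V i) : ℝ) * Module.finrank ℂ (fixedSub (ρ i) H₂)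
    with hS₂
  have e1 : S₁ * Nat.card H₁ = Nat.card G := by
    rw [← hN H₁]
    congr 1
    apply Finset.sum_subset (Finset.subset_univ _)
    intro i _ hi
    rw [hoff i hi]; simp
  have e2 : S₂ * Nat.card (H₂ ⊔ K : Subgroup G) ≤ Nat.card G := by
    rw [← hN (H₂ ⊔ K)]
    refine mul_le_mul_of_nonneg_right ?_ (Nat.cast_nonneg _)
    rw [hS₂, Finset.sum_congr rfl (fun i hi => by rw [hon i hi])]
    exact Finset.sum_le_sum_of_subset_of_nonneg (Finset.subset_univ _)
      (fun i _ _ => by positivity)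
  have hS₂0 : 0 ≤ S₂ := Finset.sum_nonneg fun i _ => by positivity
  have e3 : S₂ * Nat.card H₂ ≤ Nat.card G / 2 := by nlinarith
  calc (1 : ℝ) / 2 ≤ (S₁ * Nat.card H₁ - S₂ * Nat.card H₂) / Nat.card G := by
        rw [le_div_iff₀ hG]; linarith
    _ = ∑ i ∈ E, (Module.finrank ℂ (V i) : ℝ) / (Nat.card G) *
        ((Nat.card H₁ : ℝ) * (Module.finrank ℂ (fixedSub (ρ i) H₁)) -
          (Nat.card H₂ : ℝ) * (Module.finrank ℂ (fixedSub (ρ i) H₂))) := by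
        rw [hS₁, hS₂, Finset.sum_mul, Finset.sum_mul, ← Finset.sum_sub_distrib, Finset.sum_div]
        refine Finset.sum_congr rfl fun i _ => ?_
        ring
    _ ≤ ∑ i ∈ E, (Module.finrank ℂ (V i) : ℝ) / (Nat.card G) *
        |(Nat.card H₁ : ℝ) * (Module.finrank ℂ (fixedSub (ρ i) H₁)) -
          (Nat.card H₂ : ℝ) * (Module.finrank ℂ (fixedSub (ρ i) H₂))| :=
        Finset.sum_le_sum fun i _ =>
          mul_le_mul_of_nonneg_left (le_abs_self _) (by positivity)
    _ ≤ _ := Finset.sum_le_sum_of_subset_of_nonneg (Finset.subset_univ _)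
        (fun i _ _ => by positivity)

end fam

end WFS


/-- Let `G` be a finite group and `H₁, H₂ ≤ G` subgroups with distinct
normal cores. Let `(ρ_i)_{i ∈ ι}` be a finite family of pairwise non-isomorphic
irreducible finite-dimensional complex representations of `G` containing every
irreducible up to isomorphism. Then
`∑_i (dim V_i/|G|)·| |H₁|·dim(V_i^{H₁}) − |H₂|·dim(V_i^{H₂}) | ≥ 1/2`,
i.e. the total variation distance between the weak Fourier sampling distributions of
`H₁` and `H₂` is at least `1/2`. -/
theorem weak_fourier_sampling_distinct_cores
    (G : Type) [Group G] [Finite G] (H₁ H₂ : Subgroup G)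
    (hcore : H₁.normalCore ≠ H₂.normalCore)
    (ι : Type) [Fintype ι] (V : ι → Type)
    [∀ i, AddCommGroup (V i)] [∀ i, Module ℂ (V i)] [∀ i, FiniteDimensional ℂ (V i)]
    (ρ : ∀ i, Representation ℂ G (V i))
    (hnontriv : ∀ i, Nontrivial (V i))
    (hirr : ∀ i, ∀ W : Submodule ℂ (V i),
      (∀ g : G, ∀ v ∈ W, ρ i g v ∈ W) → W = ⊥ ∨ W = ⊤)
    (hpairwise : ∀ i i', i ≠ i' →
      ¬∃ e : V i ≃ₗ[ℂ] V i', ∀ (g : G) (v : V i), e (ρ i g v) = ρ i' g (e v))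
    (hcomplete : ∀ (W : Type) [AddCommGroup W] [Module ℂ W] [FiniteDimensional ℂ W],
      ∀ π : Representation ℂ G W, Nontrivial W →
        (∀ U : Submodule ℂ W, (∀ g : G, ∀ v ∈ U, π g v ∈ U) → U = ⊥ ∨ U = ⊤) →
        ∃ i, ∃ e : W ≃ₗ[ℂ] V i, ∀ (g : G) (v : W), e (π g v) = ρ i g (e v)) :
    (1 : ℝ) / 2 ≤
      ∑ i, (Module.finrank ℂ (V i) : ℝ) / (Nat.card G) *
        |(Nat.card H₁ : ℝ) * (Module.finrank ℂ (fixedSub (ρ i) H₁)) -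
          (Nat.card H₂ : ℝ) * (Module.finrank ℂ (fixedSub (ρ i) H₂))| := by
  have hN : ∀ H : Subgroup G, (∑ i, (Module.finrank ℂ (V i) : ℝ) *
      Module.finrank ℂ (fixedSub (ρ i) H)) * Nat.card H = Nat.card G := by
    intro H
    have h := WFS.dim_eq ρ hnontriv hirr hpairwise hcomplete _ _ (WFS.permRep H) rfl
    simp only [WFS.finrank_hom] at h
    have hq : Module.finrank ℂ ((G ⧸ H) →₀ ℂ) = Nat.card (G ⧸ H) := by
      have := Fintype.ofFinite (G ⧸ H)
      rw [Module.finrank_finsupp_self, Nat.card_eq_fintype_card]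
    rw [hq] at h
    have h3 := Subgroup.card_eq_card_quotient_mul_card_subgroup H
    rw [h3, h]
    push_cast
    rfl
  by_cases h : H₁.normalCore ≤ H₂
  · have h' : ¬ H₂.normalCore ≤ H₁ := fun h' => hcore (le_antisymm
      (Subgroup.normal_le_normalCore.2 h) (Subgroup.normal_le_normalCore.2 h'))
    have := WFS.key ρ hirr hN H₂ H₁ H₂.normalCore (Subgroup.normalCore_le _) h'
    simpa only [abs_sub_comm] using this
  · exact WFS.key ρ hirr hN H₁ H₂ H₁.normalCore (Subgroup.normalCore_le _) h
end

section
/- There exist constants c₁, c₂, c₃ > 0 such that the following holds for all integers d ≥ p ≥ 1: set α := c₁·d/p² − 2·log p and suppose α ≥ 1. Let U be a random element of the group U(d) of d×d complex unitary matrices distributed according to the Haar probability measure, and define the probability vector S by S_j := (1/p) ∑_{i=1}^p |U_{ij}|² for j = 1, …, d. Then with probability at least 1 − exp(−c₃·α) over the choice of U, one has ∑_{j=1}^d |S_j − 1/d| ≥ c₂/√p. -/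
open MeasureTheory

set_option linter.unusedSectionVars false

namespace RowBlock

/-- Average over a finite type. -/
noncomputable def av {Ω : Type*} [Fintype Ω] (F : Ω → ℝ) : ℝ := (∑ ω, F ω) / Fintype.card Ω

section avlemmas
variable {Ω : Type*} [Fintype Ω]

lemma av_add (F G : Ω → ℝ) : av (fun ω => F ω + G ω) = av F + av G := by
  simp [av, Finset.sum_add_distrib, add_div]

lemma av_sub (F G : Ω → ℝ) : av (fun ω => F ω - G ω) = av F - av G := by
  simp [av, Finset.sum_sub_distrib, sub_div]

lemma av_mul (c : ℝ) (F : Ω → ℝ) : av (fun ω => c * F ω) = c * av F := by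
  simp [av, ← Finset.mul_sum, mul_div_assoc]

lemma av_sum {κ : Type*} (s : Finset κ) (F : κ → Ω → ℝ) :
    av (fun ω => ∑ k ∈ s, F k ω) = ∑ k ∈ s, av (F k) := by
  simp only [av]
  rw [Finset.sum_comm, Finset.sum_div]

lemma av_const [Nonempty Ω] (c : ℝ) : av (fun _ : Ω => c) = c := by
  have : (Fintype.card Ω : ℝ) ≠ 0 := by exact_mod_cast Fintype.card_ne_zero
  simp [av]

lemma av_mono {F G : Ω → ℝ} (h : ∀ ω, F ω ≤ G ω) : av F ≤ av G := by
  unfold av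
  gcongr with ω
  exact h ω

lemma av_nonneg {F : Ω → ℝ} (h : ∀ ω, 0 ≤ F ω) : 0 ≤ av F :=
  div_nonneg (Finset.sum_nonneg fun ω _ => h ω) (by positivity)

lemma av_equiv (e : Ω ≃ Ω) (F : Ω → ℝ) : av (fun ω => F (e ω)) = av F := by
  simp [av, Equiv.sum_comp e F]

lemma av_cs (F G : Ω → ℝ) :
    (av fun ω => F ω * G ω) ^ 2 ≤ (av fun ω => F ω ^ 2) * av fun ω => G ω ^ 2 := by
  unfold av
  rw [div_pow, div_mul_div_comm, ← sq]
  gcongr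
  exact Finset.sum_mul_sq_le_sq_mul_sq _ _ _

lemma av_pi {κ : Type*} [Fintype κ] [DecidableEq κ] (F : κ → Ω → ℝ) :
    av (fun w : κ → Ω => ∏ k, F k (w k)) = ∏ k, av (F k) := by
  unfold av
  rw [Finset.prod_div_distrib, Finset.prod_univ_sum, Fintype.piFinset_univ]
  simp

end avlemmas

section bonami
variable {ι : Type*} [Fintype ι] [DecidableEq ι]

/-- Sign as a real number. -/
def sg (e : ι → ℤˣ) (a : ι) : ℝ := ((e a : ℤ) : ℝ)

lemma sg_sq (e : ι → ℤˣ) (a : ι) : sg e a * sg e a = 1 := by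
  unfold sg
  rcases Int.units_eq_one_or (e a) with h | h <;> simp [h]

/-- Flip coordinate `c`. -/
def flip (c : ι) : (ι → ℤˣ) ≃ (ι → ℤˣ) := Equiv.mulLeft (Pi.mulSingle c (-1))

lemma sg_flip_same (c : ι) (e : ι → ℤˣ) : sg (flip c e) c = - sg e c := by
  simp [sg, flip]

lemma sg_flip_ne {c a : ι} (h : a ≠ c) (e : ι → ℤˣ) : sg (flip c e) a = sg e a := by
  simp [sg, flip, h]

lemma av_odd (c : ι) (F : (ι → ℤˣ) → ℝ) (hF : ∀ e, F (flip c e) = F e) :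
    av (fun e => sg e c * F e) = 0 := by
  have h := av_equiv (flip c) (fun e => sg e c * F e)
  have h2 : (fun e => sg (flip c e) c * F (flip c e)) = fun e => (-1) * (sg e c * F e) := by
    funext e; rw [sg_flip_same, hF]; ring
  rw [h2, av_mul] at h
  linarith

lemma av_step2 (c : ι) (F H : (ι → ℤˣ) → ℝ) (hF : ∀ e, F (flip c e) = F e)
    (hH : ∀ e, H (flip c e) = H e) :
    av (fun e => (F e + sg e c * H e) ^ 2) = av (fun e => F e ^ 2) + av (fun e => H e ^ 2) := by
  have h0 := av_odd c (fun e => 2 * F e * H e) (fun e => by simp [hF, hH])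
  have : (fun e => (F e + sg e c * H e) ^ 2)
      = fun e => (F e ^ 2 + H e ^ 2) + sg e c * (2 * F e * H e) := by
    funext e
    linear_combination (H e ^ 2) * sg_sq e c
  rw [this, av_add, h0, av_add, add_zero]

lemma av_step4 (c : ι) (F H : (ι → ℤˣ) → ℝ) (hF : ∀ e, F (flip c e) = F e)
    (hH : ∀ e, H (flip c e) = H e) :
    av (fun e => (F e + sg e c * H e) ^ 4) = av (fun e => F e ^ 4)
      + 6 * av (fun e => F e ^ 2 * H e ^ 2) + av (fun e => H e ^ 4) := by
  have h0 := av_odd c (fun e => 4 * F e ^ 3 * H e + 4 * F e * H e ^ 3)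
    (fun e => by simp [hF, hH])
  have : (fun e => (F e + sg e c * H e) ^ 4)
      = fun e => ((F e ^ 4 + 6 * (F e ^ 2 * H e ^ 2)) + H e ^ 4)
        + sg e c * (4 * F e ^ 3 * H e + 4 * F e * H e ^ 3) := by
    funext e
    have h := sg_sq e c
    linear_combination (6 * F e ^ 2 * H e ^ 2 + 4 * F e * H e ^ 3 * sg e c
      + H e ^ 4 * (sg e c * sg e c + 1)) * h
  rw [this, av_add, h0, av_add, av_add, av_mul, add_zero]

lemma lin_flip {c : ι} {s : Finset ι} (hc : c ∉ s) (v : ι → ℝ) (e : ι → ℤˣ) :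
    ∑ a ∈ s, v a * sg (flip c e) a = ∑ a ∈ s, v a * sg e a :=
  Finset.sum_congr rfl fun a ha => by rw [sg_flip_ne (by rintro rfl; exact hc ha)]

lemma quad_flip {c : ι} {s : Finset ι} (hc : c ∉ s) (K : ι → ι → ℝ) (e : ι → ℤˣ) :
    ∑ a ∈ s, ∑ b ∈ s, K a b * (sg (flip c e) a * sg (flip c e) b)
      = ∑ a ∈ s, ∑ b ∈ s, K a b * (sg e a * sg e b) :=
  Finset.sum_congr rfl fun a ha => Finset.sum_congr rfl fun b hb => by
    rw [sg_flip_ne (by rintro rfl; exact hc ha), sg_flip_ne (by rintro rfl; exact hc hb)]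

lemma lin_moments (v : ι → ℝ) (s : Finset ι) :
    av (fun e => (∑ a ∈ s, v a * sg e a) ^ 2) = ∑ a ∈ s, v a ^ 2 ∧
    av (fun e => (∑ a ∈ s, v a * sg e a) ^ 4) ≤ 9 * (∑ a ∈ s, v a ^ 2) ^ 2 := by
  induction s using Finset.induction_on with
  | empty => simp [av]
  | insert c s hc ih =>
    obtain ⟨h2, h4⟩ := ih
    have e1 : ∀ e : ι → ℤˣ, ∑ a ∈ insert c s, v a * sg e a
        = (∑ a ∈ s, v a * sg e a) + sg e c * v c := by
      intro e; rw [Finset.sum_insert hc]; ring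
    simp only [e1]
    rw [av_step2 c _ (fun _ => v c) (lin_flip hc v) (fun _ => rfl),
      av_step4 c _ (fun _ => v c) (lin_flip hc v) (fun _ => rfl), av_const, av_const,
      Finset.sum_insert hc]
    refine ⟨by rw [h2]; ring, ?_⟩
    have : (fun e : ι → ℤˣ => (∑ a ∈ s, v a * sg e a) ^ 2 * v c ^ 2)
        = fun e => v c ^ 2 * (∑ a ∈ s, v a * sg e a) ^ 2 := by
      funext e; ring
    rw [this, av_mul, h2]
    have hp : 0 ≤ ∑ a ∈ s, v a ^ 2 := Finset.sum_nonneg fun _ _ => sq_nonneg _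
    nlinarith [mul_nonneg hp (sq_nonneg (v c)), sq_nonneg (v c ^ 2)]

lemma quad_moments (K : ι → ι → ℝ) (hs : ∀ a b, K a b = K b a) (h0 : ∀ a, K a a = 0)
    (s : Finset ι) :
    av (fun e => (∑ a ∈ s, ∑ b ∈ s, K a b * (sg e a * sg e b)) ^ 2)
      = 2 * ∑ a ∈ s, ∑ b ∈ s, K a b ^ 2 ∧
    av (fun e => (∑ a ∈ s, ∑ b ∈ s, K a b * (sg e a * sg e b)) ^ 4)
      ≤ 81 * (2 * ∑ a ∈ s, ∑ b ∈ s, K a b ^ 2) ^ 2 := by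
  induction s using Finset.induction_on with
  | empty => simp [av]
  | insert c s hc ih =>
    obtain ⟨h2, h4⟩ := ih
    obtain ⟨l2, l4⟩ := lin_moments (fun a => 2 * K a c) s
    have e1 : ∀ e : ι → ℤˣ, ∑ a ∈ insert c s, ∑ b ∈ insert c s, K a b * (sg e a * sg e b)
        = (∑ a ∈ s, ∑ b ∈ s, K a b * (sg e a * sg e b))
          + sg e c * (∑ a ∈ s, 2 * K a c * sg e a) := by
      intro e
      simp only [Finset.sum_insert hc, h0, Finset.sum_add_distrib, Finset.mul_sum]
      have : ∑ b ∈ s, K c b * (sg e c * sg e b) = ∑ b ∈ s, K b c * (sg e b * sg e c) :=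
        Finset.sum_congr rfl fun b _ => by rw [hs c b]; ring
      have h3 : ∑ b ∈ s, sg e c * (2 * K b c * sg e b)
          = 2 * ∑ b ∈ s, K b c * (sg e b * sg e c) := by
        rw [Finset.mul_sum]; exact Finset.sum_congr rfl fun b _ => by ring
      rw [this, h3]; ring
    have e2 : ∑ a ∈ insert c s, ∑ b ∈ insert c s, K a b ^ 2
        = (∑ a ∈ s, ∑ b ∈ s, K a b ^ 2) + 2 * ∑ a ∈ s, K a c ^ 2 := by
      simp only [Finset.sum_insert hc, h0, Finset.sum_add_distrib]
      have : ∑ b ∈ s, K c b ^ 2 = ∑ b ∈ s, K b c ^ 2 :=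
        Finset.sum_congr rfl fun b _ => by rw [hs c b]
      rw [this]; ring
    have e3 : ∑ a ∈ s, (2 * K a c) ^ 2 = 4 * ∑ a ∈ s, K a c ^ 2 := by
      rw [Finset.mul_sum]; exact Finset.sum_congr rfl fun b _ => by ring
    rw [e3] at l2 l4
    simp only [e1]
    rw [av_step2 c _ _ (quad_flip hc K) (lin_flip hc _),
      av_step4 c _ _ (quad_flip hc K) (lin_flip hc _), e2, h2, l2]
    refine ⟨by ring, ?_⟩
    have cs := av_cs (fun e : ι → ℤˣ => (∑ a ∈ s, ∑ b ∈ s, K a b * (sg e a * sg e b)) ^ 2)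
      (fun e => (∑ a ∈ s, 2 * K a c * sg e a) ^ 2)
    simp only [← pow_mul] at cs
    norm_num at cs
    set X := av fun e : ι → ℤˣ => (∑ a ∈ s, ∑ b ∈ s, K a b * (sg e a * sg e b)) ^ 2 *
      (∑ a ∈ s, 2 * K a c * sg e a) ^ 2
    have hq : 0 ≤ ∑ a ∈ s, ∑ b ∈ s, K a b ^ 2 :=
      Finset.sum_nonneg fun _ _ => Finset.sum_nonneg fun _ _ => sq_nonneg _
    have hl : 0 ≤ ∑ a ∈ s, K a c ^ 2 := Finset.sum_nonneg fun _ _ => sq_nonneg _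
    set q := ∑ a ∈ s, ∑ b ∈ s, K a b ^ 2
    set l := ∑ a ∈ s, K a c ^ 2
    have hX : X ≤ 27 * (2 * q) * (4 * l) := by
      apply le_of_sq_le_sq _ (by positivity)
      calc X ^ 2 ≤ _ := cs
        _ ≤ (81 * (2 * q) ^ 2) * (9 * (4 * l) ^ 2) :=
          mul_le_mul h4 l4 (av_nonneg fun e => by positivity) (by positivity)
        _ = _ := by ring
    nlinarith [mul_nonneg hq hl, sq_nonneg l]

lemma abs_lower (b x : ℝ) (hb : 0 ≤ b) : b * x ^ 2 - 4 / 27 * b ^ 3 * x ^ 4 ≤ |x| := by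
  have h : ∀ u : ℝ, 0 ≤ u → b * u ^ 2 - 4 / 27 * b ^ 3 * u ^ 4 ≤ u := by
    intro u hu
    have hv : 0 ≤ b * u := mul_nonneg hb hu
    have : 0 ≤ u * ((b * u - 3 / 2) ^ 2 * (b * u + 3)) := by positivity
    nlinarith
  have := h |x| (abs_nonneg x)
  rwa [sq_abs, show |x| ^ 4 = x ^ 4 by rw [show 4 = 2 * 2 from rfl, pow_mul, sq_abs, ← pow_mul]] at this

lemma quad_abs (K : ι → ι → ℝ) (hs : ∀ a b, K a b = K b a) (h0 : ∀ a, K a a = 0) (b : ℝ)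
    (hb : 0 ≤ b) :
    b * (2 * ∑ a, ∑ b, K a b ^ 2) - 12 * b ^ 3 * (2 * ∑ a, ∑ b, K a b ^ 2) ^ 2
      ≤ av (fun e => |∑ a, ∑ b, K a b * (sg e a * sg e b)|) := by
  obtain ⟨h2, h4⟩ := quad_moments K hs h0 Finset.univ
  have := av_mono (fun e : ι → ℤˣ => abs_lower b (∑ a, ∑ b, K a b * (sg e a * sg e b)) hb)
  rw [av_sub, av_mul, av_mul, h2] at this
  have h5 := mul_le_mul_of_nonneg_left h4 (show 0 ≤ 4 / 27 * b ^ 3 by positivity)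
  linarith

end bonami
end RowBlock
namespace RowBlock

section block
open ComplexConjugate

lemma normSq_sum {ι : Type*} (s : Finset ι) (z : ι → ℂ) :
    ‖∑ a ∈ s, z a‖ ^ 2 = ∑ a ∈ s, ∑ b ∈ s, (conj (z a) * z b).re := by
  have h : ((‖∑ a ∈ s, z a‖ ^ 2 : ℝ) : ℂ) = ∑ a ∈ s, ∑ b ∈ s, conj (z a) * z b := by
    rw [Complex.ofReal_pow, ← Complex.conj_mul', map_sum, Finset.sum_mul_sum]
  have := congrArg Complex.re h
  rw [Complex.ofReal_re] at this
  rw [this]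
  simp only [Complex.re_sum]

/-- Gram matrix of the columns. -/
noncomputable def gram {ρ ι : Type*} (R : Finset ρ) (A : ρ → ι → ℂ) (a b : ι) : ℂ :=
  ∑ i ∈ R, conj (A i a) * A i b

lemma gram_conj {ρ ι : Type*} (R : Finset ρ) (A : ρ → ι → ℂ) (a b : ι) :
    conj (gram R A a b) = gram R A b a := by
  simp [gram, mul_comm]

lemma gram_diag {ρ ι : Type*} (R : Finset ρ) (A : ρ → ι → ℂ) (a : ι) :
    gram R A a a = ((∑ i ∈ R, ‖A i a‖ ^ 2 : ℝ) : ℂ) := by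
  simp [gram, Complex.conj_mul']

lemma gram_sq {ρ ι : Type*} [Fintype ι] (R : Finset ρ) (A : ρ → ι → ℂ) :
    (∑ i ∈ R, ∑ a, ‖A i a‖ ^ 2) ^ 2 ≤ R.card * ∑ a, ∑ b, ‖gram R A a b‖ ^ 2 := by
  have h1 : ∑ a, ∑ b, ‖gram R A a b‖ ^ 2
      = ∑ i ∈ R, ∑ k ∈ R, ‖∑ a, conj (A i a) * A k a‖ ^ 2 := by
    have : ((∑ a, ∑ b, ‖gram R A a b‖ ^ 2 : ℝ) : ℂ)
      = ((∑ i ∈ R, ∑ k ∈ R, ‖∑ a, conj (A i a) * A k a‖ ^ 2 : ℝ) : ℂ) := by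
      push_cast
      simp only [← Complex.conj_mul', gram, map_sum, map_mul, Complex.conj_conj,
        Finset.sum_mul_sum]
      have e1 : ∀ f : ι → ι → ρ → ρ → ℂ, ∑ a, ∑ b, ∑ i ∈ R, ∑ k ∈ R, f a b i k
          = ∑ i ∈ R, ∑ k ∈ R, ∑ a, ∑ b, f a b i k := by
        intro f
        calc ∑ a, ∑ b, ∑ i ∈ R, ∑ k ∈ R, f a b i k
            = ∑ a, ∑ i ∈ R, ∑ b, ∑ k ∈ R, f a b i k :=
              Finset.sum_congr rfl fun a _ => Finset.sum_comm
          _ = ∑ i ∈ R, ∑ a, ∑ b, ∑ k ∈ R, f a b i k := Finset.sum_comm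
          _ = ∑ i ∈ R, ∑ a, ∑ k ∈ R, ∑ b, f a b i k :=
              Finset.sum_congr rfl fun a _ => Finset.sum_congr rfl fun a _ => Finset.sum_comm
          _ = _ := Finset.sum_congr rfl fun a _ => Finset.sum_comm
      rw [e1]
      refine Finset.sum_congr rfl fun i _ => Finset.sum_congr rfl fun k _ =>
        Finset.sum_congr rfl fun a _ => Finset.sum_congr rfl fun b _ => by ring
    exact_mod_cast this
  have h2 : ∑ i ∈ R, (∑ a, ‖A i a‖ ^ 2) ^ 2 ≤
      ∑ i ∈ R, ∑ k ∈ R, ‖∑ a, conj (A i a) * A k a‖ ^ 2 := by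
    refine Finset.sum_le_sum fun i hi => ?_
    refine le_trans (le_of_eq ?_) (Finset.single_le_sum
      (f := fun k => ‖∑ a, conj (A i a) * A k a‖ ^ 2) (fun k _ => sq_nonneg _) hi)
    simp only [Complex.conj_mul']
    rw [← sq_abs, show |∑ a, ‖A i a‖ ^ 2| = ‖((∑ a, ‖A i a‖ ^ 2 : ℝ) : ℂ)‖ by
      rw [Complex.norm_real, Real.norm_eq_abs]]
    push_cast
    rfl
  have h3 := sq_sum_le_card_mul_sum_sq (s := R) (f := fun i => ∑ a, ‖A i a‖ ^ 2)
  rw [h1]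
  exact h3.trans (mul_le_mul_of_nonneg_left h2 (by positivity))

lemma unitary_row {ι : Type*} [Fintype ι] [DecidableEq ι] (V : Matrix ι ι ℂ)
    (hV : V ∈ Matrix.unitaryGroup ι ℂ) (x : ι → ℂ) :
    ∑ j, ‖∑ a, x a * V a j‖ ^ 2 = ∑ a, ‖x a‖ ^ 2 := by
  have h1 : V * V.conjTranspose = 1 := Matrix.mem_unitaryGroup_iff.mp hV
  have h : Matrix.vecMul x V ⬝ᵥ star (Matrix.vecMul x V) = x ⬝ᵥ star x := by
    rw [Matrix.star_vecMul, ← Matrix.dotProduct_mulVec, Matrix.mulVec_mulVec, h1,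
      Matrix.one_mulVec]
  have h2 : ((∑ j, ‖∑ a, x a * V a j‖ ^ 2 : ℝ) : ℂ) = ((∑ a, ‖x a‖ ^ 2 : ℝ) : ℂ) := by
    push_cast
    simp only [← Complex.mul_conj']
    exact h
  exact_mod_cast h2

variable {m : ℕ} [NeZero m]

/-- The random unitary in one block. -/
noncomputable def Vm (m : ℕ) [NeZero m] (σ : Bool × (ZMod m → ℤˣ)) :
    Matrix (ZMod m) (ZMod m) ℂ :=
  if σ.1 then 1 else Matrix.of fun a j =>
    (sg σ.2 a : ℂ) * (ZMod.stdAddChar (a * j) * ((Real.sqrt m)⁻¹ : ℝ))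

lemma char_conj (x : ZMod m) : conj (ZMod.stdAddChar x) = ZMod.stdAddChar (-x) := by
  rw [ZMod.stdAddChar_apply, ZMod.stdAddChar_apply, AddChar.map_neg_eq_inv, Circle.coe_inv_eq_conj]

lemma char_norm (x : ZMod m) : ‖(ZMod.stdAddChar x : ℂ)‖ = 1 := by
  rw [ZMod.stdAddChar_apply]; exact Circle.norm_coe _

lemma char_sum (c : ZMod m) (hc : c ≠ 0) : ∑ j : ZMod m, (ZMod.stdAddChar (j * c) : ℂ) = 0 := by
  rw [AddChar.sum_mulShift c (ZMod.isPrimitive_stdAddChar m), if_neg hc]; simp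

lemma sqrt_inv_mul : ((Real.sqrt m)⁻¹ : ℝ) * (Real.sqrt m)⁻¹ = (m : ℝ)⁻¹ := by
  rw [← mul_inv, Real.mul_self_sqrt (by positivity)]

lemma Vm_unitary (σ : Bool × (ZMod m → ℤˣ)) : Vm m σ ∈ Matrix.unitaryGroup (ZMod m) ℂ := by
  obtain ⟨b, e⟩ := σ
  cases b
  swap
  · simp only [Vm, if_true]; exact one_mem _
  rw [Matrix.mem_unitaryGroup_iff]
  ext a b
  have hm : (m : ℂ) ≠ 0 := by exact_mod_cast NeZero.ne m
  simp only [Vm, Matrix.mul_apply, Matrix.star_apply, Bool.false_eq_true, if_false, Matrix.of_apply]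
  have h1 : ∀ j : ZMod m, (sg e a : ℂ) * (ZMod.stdAddChar (a * j) * ((Real.sqrt m)⁻¹ : ℝ)) *
      star ((sg e b : ℂ) * (ZMod.stdAddChar (b * j) * ((Real.sqrt m)⁻¹ : ℝ)))
      = (sg e a * sg e b) * (m : ℂ)⁻¹ * ZMod.stdAddChar (j * (a - b)) := by
    intro j
    rw [show j * (a - b) = a * j + - (b * j) by ring, AddChar.map_add_eq_mul, ← char_conj]
    have h2 : (((Real.sqrt m)⁻¹ : ℝ) : ℂ) * ((Real.sqrt m)⁻¹ : ℝ) = (m : ℂ)⁻¹ := by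
      rw [← Complex.ofReal_mul, sqrt_inv_mul]; simp
    simp only [Complex.star_def, map_mul, Complex.conj_ofReal]
    rw [← h2]; ring
  rw [Finset.sum_congr rfl fun j _ => h1 j, ← Finset.mul_sum,
    AddChar.sum_mulShift _ (ZMod.isPrimitive_stdAddChar m)]
  by_cases hab : a = b
  · subst hab
    have : (sg e a : ℂ) * sg e a = 1 := by exact_mod_cast sg_sq e a
    simp [this, hm]
  · simp [hab, sub_eq_zero]

/-- Column mass after rotation. -/
noncomputable def wt {ρ : Type*} (R : Finset ρ) (A : ρ → ZMod m → ℂ)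
    (σ : Bool × (ZMod m → ℤˣ)) (j : ZMod m) : ℝ :=
  ∑ i ∈ R, ‖∑ a, A i a * Vm m σ a j‖ ^ 2

/-- Phase-shifted real part of the Gram matrix. -/
noncomputable def Kf {ρ : Type*} (R : Finset ρ) (A : ρ → ZMod m → ℂ) (j a b : ZMod m) : ℝ :=
  (ZMod.stdAddChar (j * (b - a)) * gram R A a b).re

lemma wt_true {ρ : Type*} (R : Finset ρ) (A : ρ → ZMod m → ℂ) (e : ZMod m → ℤˣ) (j : ZMod m) :
    wt R A (true, e) j = ∑ i ∈ R, ‖A i j‖ ^ 2 := by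
  simp [wt, Vm, Matrix.one_apply]

lemma wt_false {ρ : Type*} (R : Finset ρ) (A : ρ → ZMod m → ℂ) (e : ZMod m → ℤˣ) (j : ZMod m) :
    wt R A (false, e) j = (m : ℝ)⁻¹ * ∑ a, ∑ b, Kf R A j a b * (sg e a * sg e b) := by
  simp only [wt, Vm, Bool.false_eq_true, if_false, Matrix.of_apply]
  simp only [normSq_sum]
  rw [Finset.sum_comm, Finset.mul_sum]
  refine Finset.sum_congr rfl fun a _ => ?_
  rw [Finset.sum_comm, Finset.mul_sum]
  refine Finset.sum_congr rfl fun b _ => ?_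
  have h1 : ∀ i, conj (A i a * ((sg e a : ℂ) * (ZMod.stdAddChar (a * j) * ((Real.sqrt m)⁻¹ : ℝ))))
      * (A i b * ((sg e b : ℂ) * (ZMod.stdAddChar (b * j) * ((Real.sqrt m)⁻¹ : ℝ))))
      = ((m : ℝ)⁻¹ * (sg e a * sg e b) : ℝ) *
        (ZMod.stdAddChar (j * (b - a)) * (conj (A i a) * A i b)) := by
    intro i
    rw [show j * (b - a) = b * j + - (a * j) by ring, AddChar.map_add_eq_mul, ← char_conj,
      ← sqrt_inv_mul]
    simp only [map_mul, Complex.conj_ofReal]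
    push_cast; ring
  simp only [h1, Complex.re_ofReal_mul]
  rw [← Finset.mul_sum, ← Complex.re_sum, ← Finset.mul_sum]
  simp only [Kf, gram]; ring

lemma Kf_symm {ρ : Type*} (R : Finset ρ) (A : ρ → ZMod m → ℂ) (j a b : ZMod m) :
    Kf R A j a b = Kf R A j b a := by
  unfold Kf
  rw [← Complex.conj_re, map_mul, gram_conj, char_conj]
  congr 3; ring_nf

lemma Kf_diag {ρ : Type*} (R : Finset ρ) (A : ρ → ZMod m → ℂ) (j a : ZMod m) :
    Kf R A j a a = ∑ i ∈ R, ‖A i a‖ ^ 2 := by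
  unfold Kf
  rw [gram_diag, sub_self, mul_zero, AddChar.map_zero_eq_one, one_mul, Complex.ofReal_re]

lemma Kf_le {ρ : Type*} (R : Finset ρ) (A : ρ → ZMod m → ℂ) (j a b : ZMod m) :
    Kf R A j a b ^ 2 ≤ ‖gram R A a b‖ ^ 2 := by
  rw [← sq_abs]
  gcongr
  refine (Complex.abs_re_le_norm _).trans ?_
  rw [norm_mul, char_norm, one_mul]

lemma re_sq (z : ℂ) : z.re ^ 2 = (‖z‖ ^ 2 + (z * z).re) / 2 := by
  rw [← Complex.normSq_eq_norm_sq, Complex.normSq_apply, Complex.mul_re]; ring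

lemma Kf_sum {ρ : Type*} (hodd : Odd m) (R : Finset ρ) (A : ρ → ZMod m → ℂ) (a b : ZMod m)
    (hab : a ≠ b) :
    ∑ j, Kf R A j a b ^ 2 = m * ‖gram R A a b‖ ^ 2 / 2 := by
  have h2 : (2 : ZMod m) * (b - a) ≠ 0 := by
    have hu : IsUnit (2 : ZMod m) := by
      have := (ZMod.isUnit_iff_coprime 2 m).mpr (Nat.coprime_two_left.mpr hodd)
      simpa using this
    intro h
    have := hu.mul_right_eq_zero.mp h
    exact hab (sub_eq_zero.mp this).symm
  simp only [Kf, re_sq, norm_mul, char_norm, one_mul]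
  rw [← Finset.sum_div, Finset.sum_add_distrib, ← Complex.re_sum]
  have h3 : ∀ j : ZMod m, (ZMod.stdAddChar (j * (b - a)) * gram R A a b) *
      (ZMod.stdAddChar (j * (b - a)) * gram R A a b)
      = (gram R A a b * gram R A a b) * ZMod.stdAddChar (j * (2 * (b - a))) := by
    intro j
    rw [show j * (2 * (b - a)) = j * (b - a) + j * (b - a) by ring, AddChar.map_add_eq_mul]
    ring
  simp only [h3]
  rw [← Finset.mul_sum, char_sum _ h2]
  simp [ZMod.card]

lemma wt_nonneg {ρ : Type*} (R : Finset ρ) (A : ρ → ZMod m → ℂ)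
    (σ : Bool × (ZMod m → ℤˣ)) (j : ZMod m) : 0 ≤ wt R A σ j :=
  Finset.sum_nonneg fun _ _ => sq_nonneg _

lemma wt_sum {ρ : Type*} (R : Finset ρ) (A : ρ → ZMod m → ℂ)
    (σ : Bool × (ZMod m → ℤˣ)) : ∑ j, wt R A σ j = ∑ i ∈ R, ∑ a, ‖A i a‖ ^ 2 := by
  unfold wt
  rw [Finset.sum_comm]
  exact Finset.sum_congr rfl fun i _ => unitary_row _ (Vm_unitary σ) _

lemma av_bool {Ω : Type*} [Fintype Ω] (F : Bool × Ω → ℝ) :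
    av F = (av (fun ω => F (true, ω)) + av (fun ω => F (false, ω))) / 2 := by
  simp only [av, Fintype.sum_prod_type, Fintype.sum_bool, Fintype.card_prod, Fintype.card_bool]
  push_cast
  rw [← add_div, div_div, mul_comm]

lemma key_false {ρ : Type*} (hodd : Odd m) (R : Finset ρ) (A : ρ → ZMod m → ℂ)
    (s : ℝ) (hs : 0 < s)
    (hO : s ^ 2 = ∑ a, ∑ b, if a = b then 0 else ‖gram R A a b‖ ^ 2) :
    5 / 64 * s ≤ av (fun e => ∑ j, |wt R A (false, e) j - (∑ i ∈ R, ∑ a, ‖A i a‖ ^ 2) / m|) := by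
  have hm : (0 : ℝ) < m := by exact_mod_cast Nat.pos_of_ne_zero (NeZero.ne m)
  set K : ZMod m → ZMod m → ZMod m → ℝ := fun j a b => if a = b then 0 else Kf R A j a b with hK
  have h1 : ∀ e j, wt R A (false, e) j - (∑ i ∈ R, ∑ a, ‖A i a‖ ^ 2) / m
      = (m : ℝ)⁻¹ * ∑ a, ∑ b, K j a b * (sg e a * sg e b) := by
    intro e j
    rw [wt_false, Finset.sum_comm (s := R), div_eq_inv_mul, ← mul_sub, ← Finset.sum_sub_distrib]
    congr 1
    refine Finset.sum_congr rfl fun a _ => ?_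
    rw [sub_eq_iff_eq_add, ← Kf_diag R A j a]
    have : ∀ b, Kf R A j a b * (sg e a * sg e b)
        = K j a b * (sg e a * sg e b) + if a = b then Kf R A j a a else 0 := by
      intro b
      by_cases hab : a = b
      · subst hab; simp [hK, sg_sq]
      · simp [hK, hab]
    simp only [this, Finset.sum_add_distrib]
    simp
  have h2 : ∀ j, 2 * ∑ a, ∑ b, K j a b ^ 2 ≤ 2 * s ^ 2 := by
    intro j
    rw [hO]
    gcongr with a _ b _
    by_cases hab : a = b
    · simp [hK, hab]
    · simp only [hK, hab, if_false]; exact Kf_le R A j a b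
  have h3 : ∑ j, 2 * ∑ a, ∑ b, K j a b ^ 2 = m * s ^ 2 := by
    rw [← Finset.mul_sum, Finset.sum_comm, hO, Finset.mul_sum, Finset.mul_sum]
    refine Finset.sum_congr rfl fun a _ => ?_
    rw [Finset.sum_comm, Finset.mul_sum, Finset.mul_sum]
    refine Finset.sum_congr rfl fun b _ => ?_
    by_cases hab : a = b
    · simp [hK, hab]
    · simp only [hK, hab, if_false]; rw [Kf_sum hodd R A a b hab]; ring
  have h4 : ∀ j, 1 / (8 * s) * (2 * ∑ a, ∑ b, K j a b ^ 2) * (5 / 8)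
      ≤ av (fun e => |∑ a, ∑ b, K j a b * (sg e a * sg e b)|) := by
    intro j
    refine le_trans ?_ (quad_abs (K j) ?_ ?_ (1 / (8 * s)) (by positivity))
    · have hq : 0 ≤ 2 * ∑ a, ∑ b, K j a b ^ 2 := by positivity
      have hq2 := h2 j
      set q := 2 * ∑ a, ∑ b, K j a b ^ 2
      have e1 : 12 * (1 / (8 * s)) ^ 3 * q ^ 2 ≤ 12 * (1 / (8 * s)) ^ 3 * (q * (2 * s ^ 2)) := by
        gcongr; nlinarith
      have e2 : 12 * (1 / (8 * s)) ^ 3 * (q * (2 * s ^ 2)) = 1 / (8 * s) * q * (3 / 8) := by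
        field_simp; ring
      linarith
    · intro a b
      by_cases hab : a = b
      · simp [hK, hab]
      · simp only [hK, hab, Ne.symm hab, if_false]; rw [Kf_symm]
    · intro a; simp [hK]
  simp only [h1, abs_mul, abs_of_pos (inv_pos.mpr hm)]
  rw [av_sum]
  simp only [av_mul]
  rw [← Finset.mul_sum]
  have h5 := Finset.sum_le_sum fun j (_ : j ∈ Finset.univ) => h4 j
  rw [← Finset.sum_mul, ← Finset.mul_sum, h3] at h5
  refine le_trans (le_of_eq ?_) (mul_le_mul_of_nonneg_left h5 (by positivity))
  field_simp; ring

lemma key_true {ρ : Type*} (R : Finset ρ) (A : ρ → ZMod m → ℂ) (p : ℕ) (hp : 1 ≤ p)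
    (h4 : 4 * p ≤ m)
    (hD : (∑ i ∈ R, ∑ a, ‖A i a‖ ^ 2) ^ 2 / (2 * p) ≤ ∑ a, (∑ i ∈ R, ‖A i a‖ ^ 2) ^ 2)
    (e : ZMod m → ℤˣ) :
    (∑ i ∈ R, ∑ a, ‖A i a‖ ^ 2) / (2 * Real.sqrt p)
      ≤ ∑ j, |wt R A (true, e) j - (∑ i ∈ R, ∑ a, ‖A i a‖ ^ 2) / m| := by
  have hp0 : (0 : ℝ) < p := by exact_mod_cast hp
  have h4' : (4 : ℝ) * p ≤ m := by exact_mod_cast h4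
  have hm : (0 : ℝ) < m := by linarith
  simp only [wt_true]
  rw [Finset.sum_comm (s := R)] at hD ⊢
  set c : ZMod m → ℝ := fun a => ∑ i ∈ R, ‖A i a‖ ^ 2
  change (∑ a, c a) / _ ≤ ∑ j, |c j - (∑ a, c a) / m|
  change (∑ a, c a) ^ 2 / _ ≤ ∑ j, c j ^ 2 at hD
  set t := ∑ a, c a with ht
  apply le_of_sq_le_sq _ (Finset.sum_nonneg fun _ _ => abs_nonneg _)
  have h1 : ∑ j, |c j - t / m| ^ 2 ≤ (∑ j, |c j - t / m|) ^ 2 :=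
    Finset.sum_sq_le_sq_sum_of_nonneg fun _ _ => abs_nonneg _
  refine le_trans ?_ h1
  have h2 : ∑ j, |c j - t / m| ^ 2 = ∑ j, c j ^ 2 - t ^ 2 / m := by
    have : ∀ j, |c j - t / m| ^ 2 = c j ^ 2 - 2 * (t / m) * c j + (t / m) ^ 2 := by
      intro j; rw [sq_abs]; ring
    simp only [this, Finset.sum_add_distrib, Finset.sum_sub_distrib, ← Finset.mul_sum, ← ht]
    simp only [Finset.sum_const, Finset.card_univ, ZMod.card, nsmul_eq_mul]
    field_simp; ring
  rw [h2, div_pow, mul_pow, Real.sq_sqrt hp0.le]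
  have h3 : t ^ 2 / m ≤ t ^ 2 / (4 * p) := by gcongr
  have h5 : t ^ 2 / (2 * p) = t ^ 2 / (4 * p) + t ^ 2 / (4 * p) := by field_simp; ring
  have h6 : t ^ 2 / (2 ^ 2 * p) = t ^ 2 / (4 * p) := by norm_num
  linarith

lemma key {ρ : Type*} (hodd : Odd m) (R : Finset ρ) (A : ρ → ZMod m → ℂ) (p : ℕ) (hp : 1 ≤ p)
    (hR : R.card = p) (h4 : 4 * p ≤ m) :
    (∑ i ∈ R, ∑ a, ‖A i a‖ ^ 2) / (40 * Real.sqrt p)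
      ≤ av (fun σ => ∑ j, |wt R A σ j - (∑ i ∈ R, ∑ a, ‖A i a‖ ^ 2) / m|) := by
  have hp0 : (0 : ℝ) < p := by exact_mod_cast hp
  have hsp : 0 < Real.sqrt p := Real.sqrt_pos.mpr hp0
  have hg := gram_sq R A
  rw [hR] at hg
  have ht0 : 0 ≤ ∑ i ∈ R, ∑ a, ‖A i a‖ ^ 2 := by positivity
  set t := ∑ i ∈ R, ∑ a, ‖A i a‖ ^ 2 with ht
  have hsplit : ∑ a, ∑ b, ‖gram R A a b‖ ^ 2 = (∑ a, (∑ i ∈ R, ‖A i a‖ ^ 2) ^ 2)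
      + ∑ a, ∑ b, if a = b then 0 else ‖gram R A a b‖ ^ 2 := by
    rw [← Finset.sum_add_distrib]
    refine Finset.sum_congr rfl fun a _ => ?_
    have : ∀ b, ‖gram R A a b‖ ^ 2 = (if a = b then (∑ i ∈ R, ‖A i a‖ ^ 2) ^ 2 else 0)
        + if a = b then 0 else ‖gram R A a b‖ ^ 2 := by
      intro b
      by_cases hab : a = b
      · subst hab
        rw [gram_diag, Complex.norm_real, Real.norm_eq_abs, sq_abs]; simp
      · simp [hab]
    rw [Finset.sum_congr rfl fun b _ => this b, Finset.sum_add_distrib]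
    simp
  rw [av_bool]
  have hn1 : 0 ≤ av (fun e => ∑ j, |wt R A (true, e) j - t / m|) :=
    av_nonneg fun _ => Finset.sum_nonneg fun _ _ => abs_nonneg _
  have hn2 : 0 ≤ av (fun e => ∑ j, |wt R A (false, e) j - t / m|) :=
    av_nonneg fun _ => Finset.sum_nonneg fun _ _ => abs_nonneg _
  by_cases hD : t ^ 2 / (2 * p) ≤ ∑ a, (∑ i ∈ R, ‖A i a‖ ^ 2) ^ 2
  · have h := av_mono (key_true R A p hp h4 hD)
    rw [av_const, ← ht] at h
    have : t / (40 * Real.sqrt p) ≤ t / (2 * Real.sqrt p) / 2 := by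
      rw [div_div]; exact div_le_div_of_nonneg_left ht0 (by positivity) (by linarith)
    linarith
  · push Not at hD
    rw [hsplit] at hg
    set O := ∑ a, ∑ b, if a = b then 0 else ‖gram R A a b‖ ^ 2 with hO
    have hO1 : t ^ 2 / (2 * p) < O := by
      have h1 : t ^ 2 / p ≤ (∑ a, (∑ i ∈ R, ‖A i a‖ ^ 2) ^ 2) + O := by
        rw [div_le_iff₀ hp0]; linarith
      have h2 : t ^ 2 / p = t ^ 2 / (2 * p) + t ^ 2 / (2 * p) := by field_simp; ring
      linarith
    have hOp : 0 < O := lt_of_le_of_lt (by positivity) hO1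
    have hs : 0 < Real.sqrt O := Real.sqrt_pos.mpr hOp
    have h := key_false hodd R A (Real.sqrt O) hs (Real.sq_sqrt hOp.le)
    rw [← ht] at h
    have h3 : t / (40 * Real.sqrt p) ≤ 5 / 64 * Real.sqrt O / 2 := by
      apply le_of_sq_le_sq _ (by positivity)
      rw [div_pow, mul_pow, Real.sq_sqrt hp0.le, div_pow, mul_pow, Real.sq_sqrt hOp.le]
      have : t ^ 2 / (40 ^ 2 * p) = t ^ 2 / (2 * p) / 800 := by rw [div_div]; ring_nf
      rw [this]; linarith
    linarith

end block
end RowBlock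
namespace RowBlock

section chernoff

lemma exp_neg_le (x : ℝ) (hx : 0 ≤ x) : Real.exp (-x) ≤ 1 - x + x ^ 2 := by
  have h1 := Real.add_one_le_exp x
  have h2 : Real.exp (-x) * Real.exp x = 1 := by rw [← Real.exp_add]; simp
  have h3 := Real.exp_pos (-x)
  have h4 : Real.exp (-x) * (x + 1) ≤ 1 :=
    (mul_le_mul_of_nonneg_left h1 h3.le).trans h2.le
  have h5 : 1 ≤ (1 - x + x ^ 2) * (x + 1) := by
    have : 0 ≤ x ^ 3 := by positivity
    nlinarith
  by_contra h
  push Not at h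
  have : (1 - x + x ^ 2) * (x + 1) < Real.exp (-x) * (x + 1) := by
    apply mul_lt_mul_of_pos_right h; linarith
  linarith

lemma chernoff {κ Ω : Type*} [Fintype κ] [DecidableEq κ] [Fintype Ω] [Nonempty Ω]
    (g : κ → Ω → ℝ) (t : κ → ℝ) (c τ l y : ℝ) (hg0 : ∀ k ω, 0 ≤ g k ω)
    (hg : ∀ k ω, g k ω ≤ 2 * t k) (hav : ∀ k, c * t k ≤ av (g k)) (hl : 0 ≤ l)
    (G : Finset κ) (hG : ∀ k ∈ G, t k ≤ τ) :
    av (fun w : κ → Ω => if ∑ k, g k (w k) < y then (1 : ℝ) else 0)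
      ≤ Real.exp (l * y - l * c * (∑ k ∈ G, t k) + 4 * l ^ 2 * τ * ∑ k ∈ G, t k) := by
  have ht0 : ∀ k, 0 ≤ t k := fun k => by
    obtain ⟨ω⟩ := ‹Nonempty Ω›
    have := hg0 k ω; have := hg k ω; linarith
  have h1 : ∀ w : κ → Ω, (if ∑ k, g k (w k) < y then (1 : ℝ) else 0)
      ≤ Real.exp (l * y) * ∏ k, (if k ∈ G then Real.exp (-(l * g k (w k))) else 1) := by
    intro w
    rw [Finset.prod_ite_mem, Finset.univ_inter, ← Real.exp_sum, ← Real.exp_add]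
    split_ifs with h
    · apply Real.one_le_exp
      have : ∑ k ∈ G, g k (w k) ≤ ∑ k, g k (w k) :=
        Finset.sum_le_sum_of_subset_of_nonneg (Finset.subset_univ _) fun k _ _ => hg0 k _
      rw [Finset.sum_neg_distrib, ← Finset.mul_sum]
      nlinarith
    · positivity
  refine (av_mono h1).trans ?_
  rw [av_mul, av_pi (fun k ω => if k ∈ G then Real.exp (-(l * g k ω)) else 1)]
  have h2 : ∀ k, av (fun ω => if k ∈ G then Real.exp (-(l * g k ω)) else 1)
      ≤ if k ∈ G then Real.exp (-(l * c * t k) + 4 * l ^ 2 * τ * t k) else 1 := by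
    intro k
    split_ifs with hk
    · have h3 : ∀ ω, Real.exp (-(l * g k ω)) ≤ (1 + 4 * l ^ 2 * τ * t k) - l * g k ω := by
        intro ω
        have h4 := exp_neg_le (l * g k ω) (mul_nonneg hl (hg0 k ω))
        have h5 : g k ω ^ 2 ≤ 4 * (τ * t k) := by
          have := hg k ω
          have := hg0 k ω
          have h6 : g k ω ^ 2 ≤ (2 * t k) ^ 2 := by gcongr
          have := mul_le_mul_of_nonneg_right (hG k hk) (ht0 k)
          nlinarith
        have h7 := mul_le_mul_of_nonneg_left h5 (sq_nonneg l)
        nlinarith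
      refine (av_mono h3).trans ?_
      rw [av_sub, av_const, av_mul]
      have h8 := mul_le_mul_of_nonneg_left (hav k) hl
      have h9 := Real.add_one_le_exp (-(l * c * t k) + 4 * l ^ 2 * τ * t k)
      linarith
    · rw [av_const]
  calc _ ≤ Real.exp (l * y) *
        ∏ k, (if k ∈ G then Real.exp (-(l * c * t k) + 4 * l ^ 2 * τ * t k) else 1) := by
        gcongr with k
        · intro k _
          exact av_nonneg fun ω => by split_ifs <;> positivity
        · exact h2 k
    _ = _ := by
        rw [Finset.prod_ite_mem, Finset.univ_inter, ← Real.exp_sum, ← Real.exp_add]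
        congr 1
        rw [Finset.sum_add_distrib, Finset.sum_neg_distrib, ← Finset.mul_sum, ← Finset.mul_sum]
        ring

lemma assembly {Ω J X : Type*} [Fintype Ω] [Nonempty Ω] [Fintype J] [Fintype X]
    (p d m N : ℕ) (hp : 1 ≤ p) (hd : 20 * p ^ 2 ≤ d) (hm4 : 4 * p ≤ m) (hm5 : m ≤ 5 * p)
    (hJ : Fintype.card J = m) (hX : Fintype.card X ≤ m)
    (W : Fin N → Ω → J → ℝ) (t : Fin N → ℝ) (r : X → ℝ)
    (hW : ∀ k ω j, 0 ≤ W k ω j) (hWt : ∀ k ω, ∑ j, W k ω j = t k)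
    (htot : ∑ k, t k + ∑ x, r x = p)
    (hkey : ∀ k, t k / (40 * Real.sqrt p) ≤ av (fun ω => ∑ j, |W k ω j - t k / m|)) :
    av (fun w : Fin N → Ω => if (∑ k, ∑ j, |W k (w k) j - p / d|) + ∑ x, |r x - p / d|
        < 1 / 640 * Real.sqrt p then (1 : ℝ) else 0)
      ≤ Real.exp (-(d / (1024000 * (p : ℝ) ^ 2))) := by
  have hp0 : (1 : ℝ) ≤ p := by exact_mod_cast hp
  have hd0 : 20 * (p : ℝ) ^ 2 ≤ d := by exact_mod_cast hd
  have hm4' : 4 * (p : ℝ) ≤ m := by exact_mod_cast hm4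
  have hm5' : (m : ℝ) ≤ 5 * p := by exact_mod_cast hm5
  have hdp : (0 : ℝ) < d := by nlinarith
  have hmp : (0 : ℝ) < m := by linarith
  have hs1 : 1 ≤ Real.sqrt p := Real.one_le_sqrt.mpr hp0
  have hss : Real.sqrt p * Real.sqrt p = p := Real.mul_self_sqrt (by linarith)
  set s := Real.sqrt p with hs
  set F : (Fin N → Ω) → ℝ := fun w =>
    (∑ k, ∑ j, |W k (w k) j - p / d|) + ∑ x, |r x - p / d| with hF
  change av (fun w => if F w < _ then (1 : ℝ) else 0) ≤ _
  by_cases hex : ∃ w0, F w0 < 1 / 640 * s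
  swap
  · push Not at hex
    have : (fun w => if F w < 1 / 640 * s then (1 : ℝ) else 0) = fun _ => 0 := by
      funext w; rw [if_neg (not_lt.mpr (hex w))]
    rw [this, av_const]; positivity
  obtain ⟨w0, hw0⟩ := hex
  have hδ : ∀ k ω, |t k - m * (p / d)| ≤ ∑ j, |W k ω j - p / d| := by
    intro k ω
    have : t k - m * (p / d) = ∑ j, (W k ω j - p / d) := by
      rw [Finset.sum_sub_distrib, hWt]; simp [hJ]
    rw [this]; exact Finset.abs_sum_le_sum_abs _ _
  have hΔ : (∑ k, |t k - m * (p / d)|) + ∑ x, |r x - p / d| < 1 / 640 * s := by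
    refine lt_of_le_of_lt ?_ hw0
    simp only [hF]
    gcongr with k
    exact hδ k _
  have hrn : 0 ≤ ∑ x, |r x - p / d| := Finset.sum_nonneg fun _ _ => abs_nonneg _
  have hkn : 0 ≤ ∑ k, |t k - m * (p / d)| := Finset.sum_nonneg fun _ _ => abs_nonneg _
  have ht0 : ∀ k, 0 ≤ t k := fun k => by
    obtain ⟨ω⟩ := ‹Nonempty Ω›
    rw [← hWt k ω]; exact Finset.sum_nonneg fun j _ => hW k ω j
  set g : Fin N → Ω → ℝ := fun k ω => ∑ j, |W k ω j - t k / m| with hgdef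
  have hg0 : ∀ k ω, 0 ≤ g k ω := fun k ω => Finset.sum_nonneg fun _ _ => abs_nonneg _
  have hg2 : ∀ k ω, g k ω ≤ 2 * t k := by
    intro k ω
    have : ∀ j ∈ Finset.univ, |W k ω j - t k / m| ≤ W k ω j + t k / m := by
      intro j _
      have h1 := hW k ω j
      have h2 : 0 ≤ t k / m := div_nonneg (ht0 k) hmp.le
      rw [abs_le]; constructor <;> linarith
    refine (Finset.sum_le_sum this).trans (le_of_eq ?_)
    rw [Finset.sum_add_distrib, hWt]
    simp [hJ]; field_simp; ring
  have hgF : ∀ k ω, g k ω ≤ (∑ j, |W k ω j - p / d|) + |t k - m * (p / d)| := by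
    intro k ω
    have : ∀ j ∈ Finset.univ, |W k ω j - t k / m|
        ≤ |W k ω j - p / d| + |t k - m * (p / d)| / m := by
      intro j _
      have h1 : |t k - m * (p / d)| / m = |p / d - t k / m| := by
        rw [abs_sub_comm, ← abs_of_pos hmp, ← abs_div, abs_of_pos hmp]; congr 1; field_simp
      rw [h1]; exact abs_sub_le _ _ _
    refine (Finset.sum_le_sum this).trans (le_of_eq ?_)
    rw [Finset.sum_add_distrib]
    simp [hJ]; field_simp
  have hind : ∀ w : Fin N → Ω, (if F w < 1 / 640 * s then (1 : ℝ) else 0)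
      ≤ if ∑ k, g k (w k) < 2 * (1 / 640 * s) then (1 : ℝ) else 0 := by
    intro w
    by_cases hw : F w < 1 / 640 * s
    · rw [if_pos hw, if_pos]
      have : ∑ k, g k (w k) ≤ ∑ k, ((∑ j, |W k (w k) j - p / d|) + |t k - m * (p / d)|) :=
        Finset.sum_le_sum fun k _ => hgF k _
      rw [Finset.sum_add_distrib] at this
      simp only [hF] at hw
      linarith
    · rw [if_neg hw]; split_ifs <;> norm_num
  refine (av_mono hind).trans ?_
  set τ : ℝ := 2 * (m * (p / d)) with hτ
  set G : Finset (Fin N) := Finset.univ.filter fun k => t k ≤ τ with hG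
  set l : ℝ := d / (640 * p * m * s) with hl
  have hl0 : 0 < l := by positivity
  refine (chernoff g t (1 / (40 * s)) τ l _ hg0 hg2
    (fun k => by have := hkey k; rwa [div_eq_inv_mul, ← one_div] at this) hl0.le G
    (fun k hk => (Finset.mem_filter.mp hk).2)).trans ?_
  apply Real.exp_le_exp.mpr
  -- lower bound on the good mass
  have hT : (p : ℝ) / 2 ≤ ∑ k ∈ G, t k := by
    have h1 : ∑ k, t k = ∑ k ∈ G, t k + ∑ k ∈ Finset.univ.filter (fun k => ¬ t k ≤ τ), t k :=
      (Finset.sum_filter_add_sum_filter_not _ _ _).symm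
    have h2 : ∑ k ∈ Finset.univ.filter (fun k => ¬ t k ≤ τ), t k
        ≤ ∑ k, 2 * |t k - m * (p / d)| := by
      refine (Finset.sum_le_sum (g := fun k => 2 * |t k - m * (p / d)|) ?_).trans
        (Finset.sum_le_sum_of_subset_of_nonneg (Finset.subset_univ _) fun k _ _ => by positivity)
      intro k hk
      have h3 := (Finset.mem_filter.mp hk).2
      have h4 := le_abs_self (t k - m * (p / d))
      push Not at h3
      linarith
    rw [← Finset.mul_sum] at h2
    have h5 : ∑ x, r x ≤ (∑ x, |r x - p / d|) + m * (p / d) := by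
      have h6 : ∑ x, r x = ∑ x, (r x - p / d) + Fintype.card X * (p / d : ℝ) := by
        rw [Finset.sum_sub_distrib]; simp
      have h7 : (Fintype.card X : ℝ) * (p / d) ≤ m * (p / d) := by
        have : (Fintype.card X : ℝ) ≤ m := by exact_mod_cast hX
        gcongr
      have h8 : ∑ x, (r x - p / d) ≤ ∑ x, |r x - p / d| :=
        Finset.sum_le_sum fun x _ => le_abs_self _
      linarith
    have h9 : (m : ℝ) * (p / d) ≤ p / 4 := by
      rw [mul_div_assoc', div_le_div_iff₀ hdp (by norm_num)]
      nlinarith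
    have h10 : s ≤ p := by nlinarith
    linarith
  set T := ∑ k ∈ G, t k
  have e1 : 4 * l ^ 2 * τ * T = l * T * (1 / (80 * s)) := by
    rw [hτ, hl]; field_simp; ring
  have e2 : l * (1 / (40 * s)) * T = l * T * (1 / (80 * s)) + l * T * (1 / (80 * s)) := by
    field_simp; ring
  have e3 : l * (p / 2) * (1 / (80 * s)) ≤ l * T * (1 / (80 * s)) := by gcongr
  have e4 : l * (p / 2) * (1 / (80 * s)) = l * s / 160 := by
    rw [← hss]; field_simp; norm_num
  have e5 : d / (1024000 * (p : ℝ) ^ 2) ≤ l * s / 320 := by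
    have : l * s / 320 = d / (204800 * p * m) := by
      rw [hl]; field_simp; norm_num
    rw [this]
    apply div_le_div_of_nonneg_left hdp.le (by positivity)
    nlinarith
  linarith

end chernoff
end RowBlock
namespace RowBlock

section final

/-- The statistic. -/
noncomputable def stat (p d : ℕ) (U : Matrix (Fin d) (Fin d) ℂ) : ℝ :=
  ∑ j : Fin d, |(1 / (p : ℝ)) * ∑ i ∈ Finset.univ.filter (fun i : Fin d => (i : ℕ) < p),
    ‖U i j‖ ^ 2 - 1 / (d : ℝ)|

variable {m : ℕ} [NeZero m]

/-- Block unitary on columns. -/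
noncomputable def Bm {d N r : ℕ} (e : ((ZMod m × Fin N) ⊕ Fin r) ≃ Fin d)
    (w : Fin N → Bool × (ZMod m → ℤˣ)) : Matrix (Fin d) (Fin d) ℂ :=
  Matrix.reindex e e (Matrix.fromBlocks (Matrix.blockDiagonal fun k => Vm m (w k)) 0 0 1)

lemma Bm_unitary {d N r : ℕ} (e : ((ZMod m × Fin N) ⊕ Fin r) ≃ Fin d)
    (w : Fin N → Bool × (ZMod m → ℤˣ)) : Bm e w ∈ Matrix.unitaryGroup (Fin d) ℂ := by
  rw [Matrix.mem_unitaryGroup_iff, Matrix.star_eq_conjTranspose]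
  unfold Bm
  rw [Matrix.conjTranspose_reindex, Matrix.reindex_apply, Matrix.reindex_apply,
    Matrix.submatrix_mul_equiv, Matrix.fromBlocks_conjTranspose, Matrix.fromBlocks_multiply,
    Matrix.blockDiagonal_conjTranspose]
  simp only [Matrix.conjTranspose_zero, Matrix.mul_zero, Matrix.zero_mul, add_zero, zero_add,
    Matrix.conjTranspose_one, Matrix.mul_one]
  rw [← Matrix.blockDiagonal_mul]
  have : (fun k => Vm m (w k) * (Vm m (w k)).conjTranspose) = 1 := by
    funext k
    exact Matrix.mem_unitaryGroup_iff.mp (Vm_unitary (w k))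
  rw [this, Matrix.blockDiagonal_one, Matrix.fromBlocks_one, Matrix.submatrix_one_equiv]

lemma mul_Bm_inl {d N r : ℕ} (e : ((ZMod m × Fin N) ⊕ Fin r) ≃ Fin d)
    (w : Fin N → Bool × (ZMod m → ℤˣ)) (U : Matrix (Fin d) (Fin d) ℂ) (i : Fin d)
    (j : ZMod m) (k : Fin N) :
    (U * Bm e w) i (e (Sum.inl (j, k))) = ∑ a, U i (e (Sum.inl (a, k))) * Vm m (w k) a j := by
  rw [Matrix.mul_apply, ← Equiv.sum_comp e, Fintype.sum_sum_type, Fintype.sum_prod_type]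
  simp [Bm, Matrix.blockDiagonal_apply]

lemma mul_Bm_inr {d N r : ℕ} (e : ((ZMod m × Fin N) ⊕ Fin r) ≃ Fin d)
    (w : Fin N → Bool × (ZMod m → ℤˣ)) (U : Matrix (Fin d) (Fin d) ℂ) (i : Fin d) (x : Fin r) :
    (U * Bm e w) i (e (Sum.inr x)) = U i (e (Sum.inr x)) := by
  rw [Matrix.mul_apply, ← Equiv.sum_comp e, Fintype.sum_sum_type]
  simp [Bm, Matrix.one_apply]

lemma card_rows (p d : ℕ) (hpd : p ≤ d) :
    (Finset.univ.filter (fun i : Fin d => (i : ℕ) < p)).card = p := by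
  rw [Fin.card_filter_val_lt]; omega

lemma fixed_bound {d N r p : ℕ} (hodd : Odd m) (e : ((ZMod m × Fin N) ⊕ Fin r) ≃ Fin d)
    (hp : 1 ≤ p) (hpd : p ≤ d) (hd : 20 * p ^ 2 ≤ d) (hm4 : 4 * p ≤ m) (hm5 : m ≤ 5 * p)
    (hr : r ≤ m) (U : Matrix (Fin d) (Fin d) ℂ) (hU : U ∈ Matrix.unitaryGroup (Fin d) ℂ) :
    av (fun w => if stat p d (U * Bm e w) < 1 / 640 / Real.sqrt p then (1 : ℝ) else 0)
      ≤ Real.exp (-(d / (1024000 * (p : ℝ) ^ 2))) := by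
  set R := Finset.univ.filter (fun i : Fin d => (i : ℕ) < p) with hR
  have hcard : R.card = p := card_rows p d hpd
  have hp0 : (0 : ℝ) < p := by exact_mod_cast hp
  set A : Fin N → Fin d → ZMod m → ℂ := fun k i a => U i (e (Sum.inl (a, k))) with hA
  have h := assembly p d m N hp hd hm4 hm5 (ZMod.card m) (X := Fin r) (by simpa using hr)
    (fun k σ j => wt R (A k) σ j) (fun k => ∑ i ∈ R, ∑ a, ‖A k i a‖ ^ 2)
    (fun x => ∑ i ∈ R, ‖U i (e (Sum.inr x))‖ ^ 2) (fun k σ j => wt_nonneg _ _ _ _)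
    (fun k σ => wt_sum _ _ _) ?_ (fun k => key hodd R (A k) p hp hcard hm4)
  · refine le_trans (le_of_eq ?_) h
    congr 1
    funext w
    have hst : (p : ℝ) * stat p d (U * Bm e w) =
        (∑ k, ∑ j, |wt R (A k) (w k) j - p / d|)
          + ∑ x, |∑ i ∈ R, ‖U i (e (Sum.inr x))‖ ^ 2 - p / d| := by
      unfold stat
      rw [Finset.mul_sum, ← Equiv.sum_comp e, Fintype.sum_sum_type, Fintype.sum_prod_type,
        Finset.sum_comm]
      have hx : ∀ x : ℝ, (p : ℝ) * |1 / (p : ℝ) * x - 1 / d| = |x - p / d| := by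
        intro x
        rw [← abs_of_pos hp0, ← abs_mul, abs_of_pos hp0]; congr 1; field_simp
      simp only [hx, mul_Bm_inl, mul_Bm_inr]
      rfl
    have hiff : stat p d (U * Bm e w) < 1 / 640 / Real.sqrt p ↔
        (p : ℝ) * stat p d (U * Bm e w) < 1 / 640 * Real.sqrt p := by
      have hs : 0 < Real.sqrt p := Real.sqrt_pos.mpr hp0
      have : 1 / 640 * Real.sqrt p = p * (1 / 640 / Real.sqrt p) := by
        nth_rewrite 2 [← Real.mul_self_sqrt hp0.le]; field_simp
      rw [this, mul_lt_mul_iff_right₀ hp0]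
    simp only [hiff, hst]
  · have hrow : ∀ i, ∑ j, ‖U i j‖ ^ 2 = 1 := by
      intro i
      have := unitary_row U hU (Pi.single i 1)
      simpa [Pi.single_apply, apply_ite] using this
    calc _ = ∑ i ∈ R, ∑ j, ‖U i j‖ ^ 2 := by
          rw [Finset.sum_comm, Finset.sum_comm (t := R), ← Finset.sum_add_distrib]
          refine Finset.sum_congr rfl fun i _ => ?_
          rw [← Equiv.sum_comp e, Fintype.sum_sum_type, Fintype.sum_prod_type, Finset.sum_comm]
      _ = p := by simp [hrow, hcard]

lemma compact_unitary (d : ℕ) : CompactSpace (Matrix.unitaryGroup (Fin d) ℂ) := by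
  have hc : IsClosed ((Matrix.unitaryGroup (Fin d) ℂ : Set (Matrix (Fin d) (Fin d) ℂ))) :=
    isClosed_unitary
  have hK : IsCompact (Set.pi Set.univ fun _ : Fin d => Set.pi Set.univ fun _ : Fin d =>
      Metric.closedBall (0 : ℂ) 1) :=
    isCompact_univ_pi fun _ => isCompact_univ_pi fun _ => isCompact_closedBall _ _
  refine isCompact_iff_compactSpace.mp (IsCompact.of_isClosed_subset hK hc ?_)
  intro U hU i _ j _
  simpa using entry_norm_bound_of_unitary hU i j

lemma right_inv {d : ℕ} [MeasurableSpace (Matrix.unitaryGroup (Fin d) ℂ)]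
    [BorelSpace (Matrix.unitaryGroup (Fin d) ℂ)]
    (μ : Measure (Matrix.unitaryGroup (Fin d) ℂ)) [IsProbabilityMeasure μ]
    (h : ∀ U₀ : Matrix.unitaryGroup (Fin d) ℂ, Measure.map (fun U => U₀ * U) μ = μ)
    (B : Matrix.unitaryGroup (Fin d) ℂ) : Measure.map (fun U => U * B) μ = μ := by
  have := compact_unitary d
  have : IsTopologicalGroup (Matrix.unitaryGroup (Fin d) ℂ) :=
    inferInstanceAs (IsTopologicalGroup (unitary (Matrix (Fin d) (Fin d) ℂ)))
  have : μ.IsMulLeftInvariant := ⟨h⟩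
  have : μ.IsOpenPosMeasure := isOpenPosMeasure_of_mulLeftInvariant_of_compact Set.univ isCompact_univ (by simp)
  have : μ.IsHaarMeasure := {}
  have hm : Measurable (fun U : Matrix.unitaryGroup (Fin d) ℂ => U * B) :=
    (continuous_mul_const B).measurable
  have : IsProbabilityMeasure (Measure.map (fun U => U * B) μ) :=
    Measure.isProbabilityMeasure_map hm.aemeasurable
  have : (Measure.map (fun U => U * B) μ).IsMulLeftInvariant := by
    constructor
    intro g
    have hg : Measurable (fun U : Matrix.unitaryGroup (Fin d) ℂ => g * U) :=
      (continuous_const_mul g).measurable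
    rw [Measure.map_map hg hm]
    conv_rhs => rw [← h g, Measure.map_map hm hg]
    congr 1
    funext U
    simp [mul_assoc]
  have := Measure.isMulInvariant_eq_smul_of_compactSpace (Measure.map (fun U => U * B) μ) μ
  set c := Measure.haarScalarFactor (Measure.map (fun U => U * B) μ) μ
  have h1 := congrArg (fun ν => ν Set.univ) this
  simp only [measure_univ, Measure.smul_apply] at h1
  have hc : c = 1 := by
    have : (1 : ENNReal) = (c : ENNReal) := by simpa [ENNReal.smul_def] using h1
    exact_mod_cast this.symm
  rw [this, hc, one_smul]

lemma stat_cont (p d : ℕ) :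
    Continuous (fun U : Matrix.unitaryGroup (Fin d) ℂ => stat p d (U : Matrix (Fin d) (Fin d) ℂ)) := by
  unfold stat
  have : ∀ i j, Continuous fun U : Matrix.unitaryGroup (Fin d) ℂ =>
      (U : Matrix (Fin d) (Fin d) ℂ) i j := fun i j =>
    (continuous_apply_apply i j).comp continuous_subtype_val
  refine continuous_finsetSum _ fun j _ => ?_
  refine Continuous.abs (Continuous.sub (Continuous.mul continuous_const ?_) continuous_const)
  exact continuous_finsetSum _ fun i _ => (this i j).norm.pow 2

lemma avg_bound {G Ω : Type*} [Group G] [MeasurableSpace G] [Fintype Ω] [Nonempty Ω]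
    (μ : Measure G) [IsProbabilityMeasure μ] (B : Ω → G) (E : Set G) (hE : MeasurableSet E)
    (hmeas : ∀ ω, Measurable fun U => U * B ω)
    (hinv : ∀ ω, Measure.map (fun U => U * B ω) μ = μ) (ε : ℝ)
    (hb : ∀ U, av (fun ω => Set.indicator E (fun _ => (1 : ℝ)) (U * B ω)) ≤ ε) :
    μ.real E ≤ ε := by
  have h1 : ∀ ω, ∫ U, Set.indicator E (fun _ => (1 : ℝ)) (U * B ω) ∂μ = μ.real E := by
    intro ω
    have := integral_map (μ := μ) (hmeas ω).aemeasurable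
      (f := Set.indicator E (fun _ => (1 : ℝ)))
      ((measurable_const.indicator hE).aestronglyMeasurable)
    rw [← this, hinv ω, integral_indicator hE]
    simp
  have hint : ∀ ω, Integrable (fun U => Set.indicator E (fun _ => (1 : ℝ)) (U * B ω)) μ := by
    intro ω
    refine Integrable.of_bound
      ((measurable_const.indicator hE).comp (hmeas ω)).aestronglyMeasurable 1 ?_
    filter_upwards with U
    by_cases hU : U * B ω ∈ E <;> simp [hU]
  have h2 : ∫ U, av (fun ω => Set.indicator E (fun _ => (1 : ℝ)) (U * B ω)) ∂μ = μ.real E := by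
    unfold av
    rw [integral_div, integral_finsetSum _ fun ω _ => hint ω]
    simp only [h1]
    exact av_const (Ω := Ω) _
  rw [← h2]
  have h3 : Integrable (fun U => av (fun ω => Set.indicator E (fun _ => (1 : ℝ)) (U * B ω))) μ := by
    unfold av
    exact (integrable_finsetSum _ fun ω _ => hint ω).div_const _
  calc _ ≤ ∫ _, ε ∂μ := integral_mono h3 (integrable_const _) hb
    _ = ε := by simp

end final
end RowBlock

open RowBlock

/-- There are constants `c₁, c₂, c₃ > 0` such that for all integers
`d ≥ p ≥ 1` with `α := c₁·d/p² − 2·log p ≥ 1`, the following holds. Let `U` be a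
Haar-random `d×d` unitary (i.e. distributed according to the unique left-invariant
probability measure on `U(d)`), and let `S_j := (1/p)∑_{i<p} |U_{ij}|²`. Then with
probability at least `1 − exp(−c₃·α)`, the total variation distance of `S` from the
uniform distribution satisfies `∑_j |S_j − 1/d| ≥ c₂/√p`. -/
theorem random_basis_row_block_far_from_uniform :
    ∃ c₁ c₂ c₃ : ℝ, 0 < c₁ ∧ 0 < c₂ ∧ 0 < c₃ ∧
      ∀ (p d : ℕ), 1 ≤ p → p ≤ d →
        ∀ α : ℝ, α = c₁ * d / (p : ℝ) ^ 2 - 2 * Real.log p → 1 ≤ α →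
          ∀ [MeasurableSpace (Matrix.unitaryGroup (Fin d) ℂ)]
            [BorelSpace (Matrix.unitaryGroup (Fin d) ℂ)]
            (μ : Measure (Matrix.unitaryGroup (Fin d) ℂ)),
            IsProbabilityMeasure μ →
            (∀ U₀ : Matrix.unitaryGroup (Fin d) ℂ,
              Measure.map (fun U => U₀ * U) μ = μ) →
            1 - Real.exp (-(c₃ * α)) ≤
              (μ {U : Matrix.unitaryGroup (Fin d) ℂ |
                  c₂ / Real.sqrt p ≤
                    ∑ j : Fin d,
                      |(1 / (p : ℝ)) *
                          ∑ i ∈ Finset.univ.filter (fun i : Fin d => (i : ℕ) < p),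
                            ‖(U : Matrix (Fin d) (Fin d) ℂ) i j‖ ^ 2 -
                        1 / (d : ℝ)|}).toReal := by
  refine ⟨1 / 20, 1 / 640, 1 / 51200, by norm_num, by norm_num, by norm_num, ?_⟩
  intro p d hp hpd α hα hα1 _ _ μ hμ hinv
  have := hμ
  have hp1 : (1 : ℝ) ≤ p := by exact_mod_cast hp
  have hlog : 0 ≤ Real.log p := Real.log_nonneg hp1
  have hle : 1 ≤ 1 / 20 * (d : ℝ) / (p : ℝ) ^ 2 := by linarith
  have hd : 20 * p ^ 2 ≤ d := by
    rw [le_div_iff₀ (by positivity)] at hle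
    have : (20 : ℝ) * (p : ℝ) ^ 2 ≤ d := by linarith
    exact_mod_cast this
  set m := 4 * p + 1 with hm
  have : NeZero m := ⟨by omega⟩
  have hodd : Odd m := ⟨2 * p, by omega⟩
  have hcard : Fintype.card ((ZMod m × Fin (d / m)) ⊕ Fin (d % m)) = Fintype.card (Fin d) := by
    simp only [Fintype.card_sum, Fintype.card_prod, ZMod.card, Fintype.card_fin]
    exact Nat.div_add_mod d m
  let e : ((ZMod m × Fin (d / m)) ⊕ Fin (d % m)) ≃ Fin d := Fintype.equivOfCardEq hcard
  have hr : d % m ≤ m := (Nat.mod_lt _ (by omega)).le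
  have : IsTopologicalGroup (Matrix.unitaryGroup (Fin d) ℂ) :=
    inferInstanceAs (IsTopologicalGroup (unitary (Matrix (Fin d) (Fin d) ℂ)))
  have hcont := stat_cont p d
  set E : Set (Matrix.unitaryGroup (Fin d) ℂ) :=
    {U | stat p d (U : Matrix (Fin d) (Fin d) ℂ) < 1 / 640 / Real.sqrt p} with hE
  have hEm : MeasurableSet E := (isOpen_lt hcont continuous_const).measurableSet
  have hbad := avg_bound μ
    (fun w : Fin (d / m) → Bool × (ZMod m → ℤˣ) =>
      (⟨Bm e w, Bm_unitary e w⟩ : Matrix.unitaryGroup (Fin d) ℂ)) E hEm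
    (fun w => (continuous_mul_const _).measurable) (fun w => right_inv μ hinv _)
    (Real.exp (-(d / (1024000 * (p : ℝ) ^ 2)))) (by
      intro U
      refine le_trans (le_of_eq ?_) (fixed_bound hodd e hp hpd hd (by omega) (by omega) hr
        (U : Matrix (Fin d) (Fin d) ℂ) U.2)
      congr 1)
  have hcompl : {U : Matrix.unitaryGroup (Fin d) ℂ |
                  1 / 640 / Real.sqrt p ≤
                    ∑ j : Fin d,
                      |(1 / (p : ℝ)) *
                          ∑ i ∈ Finset.univ.filter (fun i : Fin d => (i : ℕ) < p),
                            ‖(U : Matrix (Fin d) (Fin d) ℂ) i j‖ ^ 2 -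
                        1 / (d : ℝ)|} = Eᶜ := by
    ext U
    simp only [hE, Set.mem_ofPred_eq, Set.mem_compl_iff, not_lt, stat]
  rw [hcompl]
  change _ ≤ μ.real Eᶜ
  rw [probReal_compl_eq_one_sub hEm]
  have hexp : Real.exp (-(d / (1024000 * (p : ℝ) ^ 2))) ≤ Real.exp (-(1 / 51200 * α)) := by
    apply Real.exp_le_exp.mpr
    have : (d : ℝ) / (1024000 * (p : ℝ) ^ 2) = 1 / 51200 * (1 / 20 * (d : ℝ) / (p : ℝ) ^ 2) := by
      field_simp; ring
    rw [this]
    linarith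
  linarith
end

section
/- There exist constants c₁, c₂, c₃ > 0 such that the following holds for all integers p, q, r ≥ 1 and d with p + q + r ≤ d: set m := p + q + r and α := c₁·d/m³ − 2·log m, and suppose α ≥ 1. Let U be a random element of the group U(d) of d×d complex unitary matrices distributed according to the Haar probability measure, and define probability vectors S, T by S_j := (1/(p+r)) (∑_{i=1}^{p} |U_{ij}|² + ∑_{i=p+q+1}^{m} |U_{ij}|²) and T_j := (1/(q+r)) (∑_{i=p+1}^{p+q} |U_{ij}|² + ∑_{i=p+q+1}^{m} |U_{ij}|²) for j = 1, …, d. Then with probability at least 1 − exp(−c₃·α) over the choice of U, one has ∑_{j=1}^d |S_j − T_j| ≥ c₂·(√p/(p+r) + √q/(q+r)). -/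
open MeasureTheory

section RbAux
open ProbabilityTheory
open scoped MatrixOrder ComplexOrder


lemma rb_frob {ι κ : Type*} [Fintype ι] [Fintype κ] (A : Matrix ι κ ℂ) :
    (A * A.conjTranspose).trace.re = ∑ i, ∑ j, ‖A i j‖ ^ 2 := by
  simp only [Matrix.trace, Matrix.diag, Matrix.mul_apply, Matrix.conjTranspose_apply, Complex.re_sum]
  refine Finset.sum_congr rfl fun i _ => Finset.sum_congr rfl fun j _ => ?_
  rw [← Complex.normSq_eq_norm_sq, Complex.star_def, Complex.mul_conj]
  simp

/-- polar decomposition estimate -/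
lemma rb_polar {ι κ : Type*} [Fintype ι] [DecidableEq ι] [Fintype κ] (H : Matrix ι κ ℂ) (ε : ℝ)
    (hε : ε < 1)
    (h : ∑ i, ∑ k, ‖(H * H.conjTranspose - 1 : Matrix ι ι ℂ) i k‖ ^ 2 ≤ ε) :
    ∃ Q : Matrix ι κ ℂ, Q * Q.conjTranspose = 1 ∧ ∑ i, ∑ j, ‖(H - Q) i j‖ ^ 2 ≤ ε := by
  set M := H * H.conjTranspose with hM
  have hMp : M.PosSemidef := Matrix.posSemidef_self_mul_conjTranspose H
  set S := CFC.sqrt M with hS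
  have hSp : S.PosSemidef := Matrix.nonneg_iff_posSemidef.1 (CFC.sqrt_nonneg M)
  have hSS : S * S = M := CFC.sqrt_mul_sqrt_self M hMp.nonneg
  have hSh : S.conjTranspose = S := hSp.1
  have hD : ∑ i, ∑ k, ‖(S - 1) i k‖ ^ 2 ≤ ∑ i, ∑ k, ‖(M - 1) i k‖ ^ 2 := by
    rw [← rb_frob, ← rb_frob]
    have e : (M - 1) * (M - 1).conjTranspose - (S - 1) * (S - 1).conjTranspose
       = (S - 1) * (S * S + (S + S)) * (S - 1).conjTranspose := by
      simp only [Matrix.conjTranspose_sub, Matrix.conjTranspose_one, hSh, ← hSS,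
        Matrix.conjTranspose_mul]
      noncomm_ring
    have hp : ((S - 1) * (S * S + (S + S)) * (S - 1).conjTranspose).PosSemidef := by
      apply Matrix.PosSemidef.mul_mul_conjTranspose_same
      rw [hSS]
      exact hMp.add (hSp.add hSp)
    have := hp.trace_nonneg
    rw [← e, Matrix.trace_sub] at this
    have := (Complex.le_def.1 this).1
    simp at this
    simpa using this
  have hu : IsUnit S := by
    let _ := Matrix.frobeniusNormedRing (m := ι) (α := ℂ)
    let _ := Matrix.frobeniusNormedAlgebra (m := ι) (α := ℂ) (R := ℂ)
    have : CompleteSpace (Matrix ι ι ℂ) := FiniteDimensional.complete ℂ _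
    have hn : ‖1 - S‖ < 1 := by
      rw [norm_sub_rev]
      have : ‖S - 1‖ ^ 2 ≤ ε := by
        rw [Matrix.frobenius_norm_def, ← Real.sqrt_eq_rpow, Real.sq_sqrt (by positivity)]
        simpa using hD.trans h
      nlinarith [norm_nonneg (S - 1)]
    have := isUnit_one_sub_of_norm_lt_one hn
    simpa using this
  have hdet : IsUnit S.det := (Matrix.isUnit_iff_isUnit_det S).1 hu
  refine ⟨S⁻¹ * H, ?_, ?_⟩
  · rw [Matrix.conjTranspose_mul, Matrix.conjTranspose_nonsing_inv, hSh]
    calc S⁻¹ * H * (H.conjTranspose * S⁻¹) = S⁻¹ * M * S⁻¹ := by rw [hM]; simp only [Matrix.mul_assoc]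
      _ = 1 := by rw [← hSS, ← Matrix.mul_assoc, Matrix.nonsing_inv_mul _ hdet, Matrix.one_mul,
                  Matrix.mul_nonsing_inv _ hdet]
  · have e : H - S⁻¹ * H = (S - 1) * S⁻¹ * H := by
      rw [Matrix.sub_mul, Matrix.mul_nonsing_inv _ hdet, Matrix.sub_mul, Matrix.one_mul, Matrix.one_mul]
    refine le_trans ?_ (hD.trans h)
    rw [← rb_frob, ← rb_frob]
    apply le_of_eq
    congr 2
    rw [e, Matrix.conjTranspose_mul, Matrix.conjTranspose_mul, Matrix.conjTranspose_nonsing_inv, hSh]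
    calc (S - 1) * S⁻¹ * H * (H.conjTranspose * (S⁻¹ * (S - 1).conjTranspose))
        = (S - 1) * (S⁻¹ * M * S⁻¹) * (S - 1).conjTranspose := by
          rw [hM]; simp only [Matrix.mul_assoc]
      _ = _ := by rw [← hSS, ← Matrix.mul_assoc S⁻¹, Matrix.nonsing_inv_mul _ hdet, Matrix.one_mul,
                  Matrix.mul_nonsing_inv _ hdet, Matrix.mul_one]

/-- extension of orthonormal rows to a unitary -/
lemma rb_extend {ι : Type*} [Fintype ι] [DecidableEq ι] {d : ℕ} (e : ι ↪ Fin d)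
    (Q : Matrix ι (Fin d) ℂ) (hQ : Q * Q.conjTranspose = 1) :
    ∃ U : Matrix.unitaryGroup (Fin d) ℂ, ∀ i j, (U : Matrix (Fin d) (Fin d) ℂ) (e i) j = Q i j := by
  classical
  set v : Fin d → EuclideanSpace ℂ (Fin d) := fun k =>
    WithLp.toLp 2 (fun j => (Function.extend e Q 0) k j) with hv
  have hvi : ∀ i, v (e i) = WithLp.toLp 2 (fun j => Q i j) := by
    intro i
    simp only [hv]
    congr 1
    funext j
    exact congrFun (e.injective.extend_apply Q 0 i) j
  have ho : Orthonormal ℂ ((Set.range e).domRestrict v) := by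
    rw [orthonormal_iff_ite]
    rintro ⟨_, i, rfl⟩ ⟨_, k, rfl⟩
    have := congrFun (congrFun hQ k) i
    simp only [Matrix.mul_apply, Matrix.conjTranspose_apply, Matrix.one_apply] at this
    simp only [Set.domRestrict_apply, hvi, PiLp.inner_apply]
    simp only [RCLike.inner_apply]
    rw [show (∑ j, Q k j * (starRingEnd ℂ) (Q i j)) = ∑ j, Q k j * star (Q i j) from rfl, this]
    by_cases hik : i = k
    · subst hik; simp
    · rw [if_neg (Ne.symm hik), if_neg]
      intro hh
      exact hik (e.injective (congrArg Subtype.val hh))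
  obtain ⟨b, hb⟩ := ho.exists_orthonormalBasis_extension_of_card_eq (by simp)
  refine ⟨⟨Matrix.of fun i j => b i j, ?_⟩, ?_⟩
  · rw [Matrix.mem_unitaryGroup_iff]
    ext i k
    have := (orthonormal_iff_ite.1 b.orthonormal) k i
    simp only [Matrix.mul_apply, Matrix.star_apply, Matrix.of_apply, Matrix.one_apply]
    simp only [PiLp.inner_apply, RCLike.inner_apply] at this
    simp only [Complex.star_def]
    rw [this]; simp [eq_comm]
  · intro i j
    simp [hb _ ⟨i, rfl⟩, hvi]

lemma rb_pi_std {κ F : Type*} [Fintype κ] [NormedAddCommGroup F] [InnerProductSpace ℝ F]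
    [FiniteDimensional ℝ F] [MeasurableSpace F] [BorelSpace F] :
    (Measure.pi (fun _ : κ => stdGaussian F)).map (WithLp.toLp 2) =
      stdGaussian (PiLp 2 (fun _ : κ => F)) := by
  have : SecondCountableTopology F := by
    have := FiniteDimensional.proper ℝ F
    infer_instance
  apply Measure.ext_of_charFun
  ext t
  simp_rw [charFun_stdGaussian, charFun_pi, charFun_stdGaussian, ← Complex.exp_sum]
  rw [← Complex.ofReal_pow, PiLp.norm_sq_eq_of_L2]
  push_cast
  simp [Finset.sum_div, neg_div]

lemma rb_unit_norm {d : ℕ} (V : Matrix.unitaryGroup (Fin d) ℂ) (x : Fin d → ℂ) :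
    ∑ j, ‖∑ k, (V : Matrix (Fin d) (Fin d) ℂ) k j * x k‖ ^ 2 = ∑ k, ‖x k‖ ^ 2 := by
  have hV : (V : Matrix (Fin d) (Fin d) ℂ) * star (V : Matrix (Fin d) (Fin d) ℂ) = 1 :=
    Matrix.mem_unitaryGroup_iff.1 V.2
  have hn : ∀ z : ℂ, ((‖z‖ ^ 2 : ℝ) : ℂ) = z * star z := by
    intro z
    rw [← Complex.normSq_eq_norm_sq, Complex.star_def, Complex.mul_conj]
  have : ((∑ j, ‖∑ k, (V : Matrix (Fin d) (Fin d) ℂ) k j * x k‖ ^ 2 : ℝ) : ℂ) = ((∑ k, ‖x k‖ ^ 2 : ℝ) : ℂ) := by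
    rw [Complex.ofReal_sum, Complex.ofReal_sum]
    simp_rw [hn]
    have h1 : ∀ j, (∑ k, (V : Matrix (Fin d) (Fin d) ℂ) k j * x k) * star (∑ k, (V : Matrix (Fin d) (Fin d) ℂ) k j * x k)
        = ∑ k, ∑ l, x k * star (x l) * ((V : Matrix (Fin d) (Fin d) ℂ) k j * star ((V : Matrix (Fin d) (Fin d) ℂ) l j)) := by
      intro j
      rw [star_sum, Finset.sum_mul_sum]
      refine Finset.sum_congr rfl fun k _ => Finset.sum_congr rfl fun l _ => ?_
      rw [star_mul]; ring
    simp_rw [h1]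
    rw [Finset.sum_comm]
    refine Finset.sum_congr rfl fun k _ => ?_
    rw [Finset.sum_comm]
    simp_rw [← Finset.mul_sum]
    have h2 : ∀ l, ∑ j, ((V : Matrix (Fin d) (Fin d) ℂ) k j * star ((V : Matrix (Fin d) (Fin d) ℂ) l j)) = if k = l then 1 else 0 := by
      intro l
      have := congrFun (congrFun hV k) l
      simpa only [Matrix.mul_apply, Matrix.star_apply, Matrix.one_apply] using this
    simp_rw [h2]
    simp
  exact_mod_cast this

/-- right multiplication by a unitary, on column tuples -/
noncomputable def rbAct {ι : Type*} {d : ℕ} (V : Matrix.unitaryGroup (Fin d) ℂ)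
    (G : Fin d → EuclideanSpace ℂ ι) : Fin d → EuclideanSpace ℂ ι :=
  fun j => ∑ k, (V : Matrix (Fin d) (Fin d) ℂ) k j • G k

lemma rbAct_apply {ι : Type*} {d : ℕ} (V : Matrix.unitaryGroup (Fin d) ℂ)
    (G : Fin d → EuclideanSpace ℂ ι) (j : Fin d) (i : ι) :
    rbAct V G j i = ∑ k, (V : Matrix (Fin d) (Fin d) ℂ) k j * G k i := by
  simp [rbAct]

noncomputable def rbNu (ι : Type*) [Fintype ι] (d : ℕ) : Measure (Fin d → EuclideanSpace ℂ ι) :=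
  Measure.pi (fun _ : Fin d => stdGaussian (EuclideanSpace ℂ ι))

instance (ι : Type*) [Fintype ι] (d : ℕ) : IsProbabilityMeasure (rbNu ι d) := by
  unfold rbNu; infer_instance

lemma rb_invariant {ι : Type*} [Fintype ι] {d : ℕ} (V : Matrix.unitaryGroup (Fin d) ℂ) :
    (rbNu ι d).map (rbAct V) = rbNu ι d := by
  let f : (PiLp 2 (fun _ : Fin d => EuclideanSpace ℂ ι)) →ₗᵢ[ℝ] (PiLp 2 (fun _ : Fin d => EuclideanSpace ℂ ι)) :=
    { toFun := fun x => WithLp.toLp 2 (rbAct V (WithLp.ofLp x))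
      map_add' := by
        intro x y; ext j i
        simp [rbAct_apply, mul_add, Finset.sum_add_distrib]
      map_smul' := by
        intro c x; ext j i
        simp [rbAct_apply, Finset.mul_sum, mul_left_comm]
      norm_map' := by
        intro x
        have : ‖(WithLp.toLp 2 (rbAct V (WithLp.ofLp x)) : (PiLp 2 (fun _ : Fin d => EuclideanSpace ℂ ι)))‖ ^ 2 = ‖x‖ ^ 2 := by
          rw [PiLp.norm_sq_eq_of_L2, PiLp.norm_sq_eq_of_L2]
          simp_rw [PiLp.norm_sq_eq_of_L2]
          rw [Finset.sum_comm]
          conv_rhs => rw [Finset.sum_comm]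
          refine Finset.sum_congr rfl fun i _ => ?_
          simp_rw [rbAct_apply]
          exact rb_unit_norm V (fun k => x k i)
        exact (sq_eq_sq₀ (norm_nonneg _) (norm_nonneg _)).1 this }
  have hf := stdGaussian_map (f.toLinearIsometryEquiv rfl)
  have h1 : rbNu ι d = (stdGaussian (PiLp 2 (fun _ : Fin d => EuclideanSpace ℂ ι))).map (WithLp.ofLp) := by
    rw [← rb_pi_std, Measure.map_map (by fun_prop) (by fun_prop)]
    simp [Function.comp_def, rbNu]
  have hm : Measurable (f.toLinearIsometryEquiv rfl : (PiLp 2 (fun _ : Fin d => EuclideanSpace ℂ ι)) → (PiLp 2 (fun _ : Fin d => EuclideanSpace ℂ ι))) :=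
    (LinearIsometryEquiv.continuous _).measurable
  have hm' : Measurable (rbAct V : (Fin d → EuclideanSpace ℂ ι) → _) := by
    unfold rbAct; fun_prop
  conv_rhs => rw [h1, ← hf]
  rw [h1, Measure.map_map hm' (by fun_prop), Measure.map_map (by fun_prop) hm]
  rfl
lemma rb_gauss_sq (s : ℝ) :
    ‖∫ x : ℝ, Complex.exp (Complex.I * s * (x : ℂ) ^ 2) ∂(gaussianReal 0 1)‖ ^ 2
      = (Real.sqrt (1 + 4 * s ^ 2))⁻¹ := by
  rw [integral_gaussianReal_eq_integral_smul (by norm_num)]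
  have h1 : ∀ x : ℝ, gaussianPDFReal 0 1 x • Complex.exp (Complex.I * s * (x : ℂ) ^ 2)
      = ((Real.sqrt (2 * Real.pi))⁻¹ : ℝ) * Complex.exp (-(1 / 2 - Complex.I * s) * (x : ℂ) ^ 2) := by
    intro x
    rw [gaussianPDFReal_def, Complex.real_smul]
    push_cast
    rw [mul_assoc, ← Complex.exp_add]
    simp only [NNReal.coe_one, mul_one, sub_zero]
    congr 2
    ring
  simp_rw [h1]
  rw [integral_const_mul, integral_gaussian_complex (by simp)]
  rw [norm_mul, mul_pow, ← norm_pow (_ ^ (1 / 2 : ℂ))]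
  have h2 : ((Real.pi / (1 / 2 - Complex.I * s) : ℂ) ^ (1 / 2 : ℂ)) ^ 2 = Real.pi / (1 / 2 - Complex.I * s) := by
    have := Complex.cpow_nat_inv_pow (Real.pi / (1 / 2 - Complex.I * s) : ℂ) (n := 2) (by norm_num)
    simpa only [one_div, Nat.cast_ofNat] using this
  rw [h2, norm_div, Complex.norm_real, Complex.norm_real, Real.norm_eq_abs, Real.norm_eq_abs, sq_abs,
    abs_of_pos Real.pi_pos, inv_pow, Real.sq_sqrt (by positivity)]
  have h3 : ‖(1 / 2 - Complex.I * s : ℂ)‖ = Real.sqrt (1 + 4 * s ^ 2) / 2 := by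
    rw [Complex.norm_eq_sqrt_sq_add_sq]
    simp
    rw [show ((2 : ℝ) ^ 2)⁻¹ + s ^ 2 = (1 + 4 * s ^ 2) / 2 ^ 2 by ring, Real.sqrt_div (by positivity),
      Real.sqrt_sq (by norm_num)]
  rw [h3]
  have : 0 < Real.sqrt (1 + 4 * s ^ 2) := Real.sqrt_pos.2 (by positivity)
  have := Real.pi_pos
  field_simp

lemma rb_gauss_cplx (s : ℝ) :
    ‖∫ z : ℂ, Complex.exp (Complex.I * s * ((‖z‖ ^ 2 : ℝ) : ℂ)) ∂(stdGaussian ℂ)‖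
      = (Real.sqrt (1 + 4 * s ^ 2))⁻¹ := by
  rw [stdGaussian_eq_map_pi_orthonormalBasis Complex.orthonormalBasisOneI]
  rw [integral_map (Measurable.aemeasurable (by fun_prop))
    (Measurable.aestronglyMeasurable (by fun_prop))]
  have h1 : ∀ x : Fin 2 → ℝ, Complex.exp (Complex.I * s *
      ((‖∑ i, x i • Complex.orthonormalBasisOneI i‖ ^ 2 : ℝ) : ℂ))
      = ∏ i, Complex.exp (Complex.I * s * (x i : ℂ) ^ 2) := by
    intro x
    have : ‖∑ i, x i • Complex.orthonormalBasisOneI i‖ ^ 2 = x 0 ^ 2 + x 1 ^ 2 := by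
      rw [← Complex.normSq_eq_norm_sq]
      simp [Complex.normSq_apply]
      ring
    rw [this, Fin.prod_univ_two, ← Complex.exp_add]
    push_cast
    ring_nf
  simp_rw [h1]
  rw [integral_fintype_prod_eq_pow (fun x : ℝ => Complex.exp (Complex.I * s * (x : ℂ) ^ 2))]
  rw [norm_pow, Fintype.card_fin, rb_gauss_sq]

lemma rb_prod_ge {ι : Type*} (s : Finset ι) (a : ι → ℝ) (ha : ∀ i, 0 ≤ a i) :
    1 + ∑ i ∈ s, a i ≤ ∏ i ∈ s, (1 + a i) := by
  classical
  induction s using Finset.induction_on with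
  | empty => simp
  | insert i s hi ih =>
    rw [Finset.sum_insert hi, Finset.prod_insert hi]
    have := Finset.sum_nonneg (s := s) (fun k _ => ha k)
    nlinarith [ha i, mul_nonneg (ha i) this, mul_le_mul_of_nonneg_left ih (ha i)]

lemma rb_col_char {ι : Type*} [Fintype ι] (w : ι → ℝ) (σ : ℝ) (hσ : 0 < σ) (hw : ∑ i, w i ^ 2 = σ ^ 2) :
    ‖∫ c : EuclideanSpace ℂ ι, Complex.exp (Complex.I * (((∑ i, w i * ‖c i‖ ^ 2) / σ : ℝ) : ℂ))
      ∂(stdGaussian (EuclideanSpace ℂ ι))‖ ≤ 1 / 2 := by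
  have h0 : stdGaussian (EuclideanSpace ℂ ι) = 
    (Measure.pi (fun _ : ι => stdGaussian ℂ)).map (WithLp.toLp 2) := rb_pi_std.symm
  rw [h0, integral_map (by fun_prop) (by fun_prop)]
  have h1 : ∀ x : ι → ℂ, Complex.exp (Complex.I * (((∑ i, w i * ‖(WithLp.toLp 2 x : EuclideanSpace ℂ ι) i‖ ^ 2) / σ : ℝ) : ℂ))
     = ∏ i, Complex.exp (Complex.I * ((w i / σ : ℝ) : ℂ) * ((‖x i‖ ^ 2 : ℝ) : ℂ)) := by
    intro x
    rw [← Complex.exp_sum]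
    congr 1
    rw [Finset.sum_div, Complex.ofReal_sum, Finset.mul_sum]
    refine Finset.sum_congr rfl fun i _ => ?_
    push_cast
    ring
  simp_rw [h1]
  rw [integral_fintype_prod_eq_prod (fun i (z : ℂ) => Complex.exp (Complex.I * ((w i / σ : ℝ) : ℂ) * ((‖z‖ ^ 2 : ℝ) : ℂ)))]
  rw [norm_prod]
  simp_rw [rb_gauss_cplx]
  rw [Finset.prod_inv_distrib, ← Real.sqrt_prod _ (fun i _ => by positivity)]
  rw [one_div]
  apply inv_anti₀ (by norm_num)
  apply Real.le_sqrt_of_sq_le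
  refine le_trans ?_ (rb_prod_ge _ (fun i => 4 * (w i / σ) ^ 2) (fun i => by positivity))
  have : ∑ i, 4 * (w i / σ) ^ 2 = 4 := by
    simp_rw [div_pow, ← mul_div_assoc]
    rw [← Finset.sum_div, ← Finset.mul_sum, hw]
    field_simp
  rw [this]; norm_num

lemma rb_exp_bound (y : ℝ) (hy : 0 ≤ y) : Real.exp (-y) ≤ 1 - min 2 y / 4 := by
  have e1 : Real.exp (-1) ≤ 1 / 2 := by
    have := Real.exp_neg_one_lt_d9; linarith
  rcases le_total y 1 with h | h
  · rw [min_eq_right (by linarith)]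
    have h1 := Real.one_sub_le_exp_neg y
    have h2 := Real.add_one_le_exp y
    have : Real.exp (-y) ≤ 1 / (1 + y) := by
      rw [Real.exp_neg, one_div]; exact inv_anti₀ (by linarith) (by linarith)
    refine this.trans ?_
    rw [div_le_iff₀ (by linarith)]
    nlinarith
  · have : Real.exp (-y) ≤ Real.exp (-1) := Real.exp_le_exp.2 (by linarith)
    have := min_le_left 2 y
    linarith

lemma rb_col_laplace {ι : Type*} [Fintype ι] (w : ι → ℝ) (σ : ℝ) (hσ : 0 < σ) (hw : ∑ i, w i ^ 2 = σ ^ 2) :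
    ∫ c : EuclideanSpace ℂ ι, Real.exp (-(|∑ i, w i * ‖c i‖ ^ 2| / σ))
      ∂(stdGaussian (EuclideanSpace ℂ ι)) ≤ Real.exp (-(1 / 8)) := by
  set γ := stdGaussian (EuclideanSpace ℂ ι) with hγ
  set X : EuclideanSpace ℂ ι → ℝ := fun c => (∑ i, w i * ‖c i‖ ^ 2) / σ with hX
  have hXm : Measurable X := by fun_prop
  have hb : ∀ c, |∑ i, w i * ‖c i‖ ^ 2| / σ = |X c| := by
    intro c; rw [hX]; simp only [abs_div, abs_of_pos hσ]
  simp_rw [hb]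
  have hint : Integrable (fun c => min 2 |X c|) γ := by
    refine Integrable.of_bound (C := 2) (by fun_prop) (Filter.Eventually.of_forall fun c => ?_)
    rw [Real.norm_eq_abs, abs_of_nonneg (le_min (by norm_num) (abs_nonneg _))]
    exact min_le_left _ _
  have hint2 : Integrable (fun c => Complex.exp (Complex.I * (X c : ℂ))) γ := by
    refine Integrable.of_bound (C := 1) (by fun_prop) (Filter.Eventually.of_forall fun c => ?_)
    rw [mul_comm, Complex.norm_exp_ofReal_mul_I]
  have h1 : 1 / 2 ≤ ∫ c, min 2 |X c| ∂γ := by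
    have hc := rb_col_char w σ hσ hw
    have e : ∫ c, (1 - Complex.exp (Complex.I * (X c : ℂ))) ∂γ = 1 - ∫ c, Complex.exp (Complex.I * (X c : ℂ)) ∂γ := by
      rw [integral_sub (integrable_const _) hint2]; simp
    have h2 : ‖∫ c, (1 - Complex.exp (Complex.I * (X c : ℂ))) ∂γ‖ ≤ ∫ c, min 2 |X c| ∂γ := by
      refine norm_integral_le_of_norm_le hint (Filter.Eventually.of_forall fun c => ?_)
      rw [norm_sub_rev]
      refine le_min ?_ ?_
      · refine (norm_sub_le _ _).trans ?_
        rw [mul_comm, Complex.norm_exp_ofReal_mul_I]; norm_num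
      · exact Real.norm_exp_I_mul_ofReal_sub_one_le
    rw [e] at h2
    have h3 := norm_sub_norm_le (1 : ℂ) (∫ c, Complex.exp (Complex.I * (X c : ℂ)) ∂γ)
    rw [norm_one] at h3
    linarith
  calc ∫ c, Real.exp (-|X c|) ∂γ ≤ ∫ c, (1 - min 2 |X c| / 4) ∂γ := by
        refine integral_mono ?_ ((integrable_const _).sub (hint.div_const _)) fun c => rb_exp_bound _ (abs_nonneg _)
        refine Integrable.of_bound (C := 1) (by fun_prop) (Filter.Eventually.of_forall fun c => ?_)
        rw [Real.norm_eq_abs, Real.abs_exp, Real.exp_le_one_iff]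
        simp
    _ = 1 - (∫ c, min 2 |X c| ∂γ) / 4 := by
        rw [integral_sub (integrable_const _) (hint.div_const _), integral_div]; simp
    _ ≤ 1 - 1 / 8 := by linarith
    _ ≤ _ := Real.one_sub_le_exp_neg _

lemma rb_chernoff {ι : Type*} [Fintype ι] (d : ℕ) (w : ι → ℝ) (σ : ℝ) (hσ : 0 < σ) (hw : ∑ i, w i ^ 2 = σ ^ 2) :
    (rbNu ι d).real {G | ∑ j, |∑ i, w i * ‖G j i‖ ^ 2| ≤ d * σ / 16} ≤ Real.exp (-(d / 16)) := by
  set Y : (Fin d → EuclideanSpace ℂ ι) → ℝ := fun G => ∏ j, Real.exp (-(|∑ i, w i * ‖G j i‖ ^ 2| / σ)) with hY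
  have hYm : Measurable Y := by fun_prop
  have hI : ∫ G, Y G ∂(rbNu ι d) ≤ Real.exp (-(d / 8)) := by
    rw [hY, rbNu, integral_fintype_prod_eq_pow (fun c : EuclideanSpace ℂ ι => Real.exp (-(|∑ i, w i * ‖c i‖ ^ 2| / σ)))]
    rw [Fintype.card_fin]
    calc _ ≤ (Real.exp (-(1 / 8))) ^ d := 
          pow_le_pow_left₀ (integral_nonneg fun _ => (Real.exp_pos _).le) (rb_col_laplace w σ hσ hw) d
      _ = _ := by rw [← Real.exp_nat_mul]; congr 1; ring
  have hYint : Integrable Y (rbNu ι d) := by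
    refine Integrable.of_bound (C := 1) (by fun_prop) (Filter.Eventually.of_forall fun c => ?_)
    rw [hY, Real.norm_eq_abs, Finset.abs_prod]
    refine Finset.prod_le_one (fun _ _ => abs_nonneg _) fun j _ => ?_
    rw [Real.abs_exp, Real.exp_le_one_iff]
    simp only [Left.neg_nonpos_iff]; positivity
  have hM := mul_meas_ge_le_integral_of_nonneg (μ := rbNu ι d) (f := Y)
    (Filter.Eventually.of_forall fun G => Finset.prod_nonneg fun _ _ => (Real.exp_pos _).le) hYint (Real.exp (-(d / 16)))
  have hsub : {G | ∑ j, |∑ i, w i * ‖G j i‖ ^ 2| ≤ d * σ / 16} ⊆ {G | Real.exp (-(d / 16)) ≤ Y G} := by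
    intro G hG
    simp only [Set.mem_ofPred_eq, hY] at hG ⊢
    rw [← Real.exp_sum, Real.exp_le_exp, Finset.sum_neg_distrib, ← Finset.sum_div]
    apply neg_le_neg
    rw [div_le_iff₀ hσ]
    linarith
  have hmono : (rbNu ι d).real {G | ∑ j, |∑ i, w i * ‖G j i‖ ^ 2| ≤ d * σ / 16} ≤ (rbNu ι d).real {G | Real.exp (-(d / 16)) ≤ Y G} :=
    measureReal_mono hsub
  have hp := Real.exp_pos (-(d / 16 : ℝ))
  have he : Real.exp (-(d / 8 : ℝ)) = Real.exp (-(d / 16 : ℝ)) * Real.exp (-(d / 16 : ℝ)) := by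
    rw [← Real.exp_add]; congr 1; ring
  rw [he] at hI
  exact hmono.trans (le_of_mul_le_mul_left (hM.trans hI) hp)
noncomputable def rbK : ℝ := ∫ x, x ^ 4 ∂(gaussianReal 0 1)

lemma rbK_nonneg : 0 ≤ rbK := integral_nonneg fun x => by positivity

section
variable {E : Type*} [NormedAddCommGroup E] [InnerProductSpace ℝ E] [FiniteDimensional ℝ E]
  [MeasurableSpace E] [BorelSpace E]

open scoped RealInnerProductSpace

lemma rb_law (x : E) (hx : ‖x‖ = 1) :
    (stdGaussian E).map (fun c => ⟪x, c⟫) = gaussianReal 0 1 := by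
  have := IsGaussian.map_eq_gaussianReal (μ := stdGaussian E) (innerSL ℝ x)
  rw [variance_dual_stdGaussian, integral_strongDual_stdGaussian, innerSL_apply_norm, hx] at this
  simpa using this

lemma rb_memLp4 (x : E) : MemLp (fun c => ⟪x, c⟫) 4 (stdGaussian E) := by
  have := IsGaussian.memLp_dual (stdGaussian E) (innerSL ℝ x) 4 (by norm_num)
  simpa using this

lemma rb_fourth (x : E) (hx : ‖x‖ = 1) : ∫ c, ⟪x, c⟫ ^ 4 ∂(stdGaussian E) = rbK := by
  rw [rbK, ← rb_law x hx, integral_map (by fun_prop) (by fun_prop)]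

lemma rb_int4 (x : E) : Integrable (fun c => ⟪x, c⟫ ^ 4) (stdGaussian E) := by
  have := (rb_memLp4 x).integrable_norm_pow (p := 4) (by norm_num)
  refine this.congr (Filter.Eventually.of_forall fun c => ?_)
  simp only [Real.norm_eq_abs]
  rw [show (4 : ℕ) = 2 * 2 from rfl, pow_mul, pow_mul, sq_abs]

lemma rb_memLp2 (x y : E) : MemLp (fun c => ⟪x, c⟫ * ⟪y, c⟫) 2 (stdGaussian E) := by
  refine (memLp_two_iff_integrable_sq (by fun_prop)).2 ?_
  refine Integrable.mono' (((rb_int4 x).add (rb_int4 y))) (by fun_prop) (Filter.Eventually.of_forall fun c => ?_)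
  simp only [Real.norm_eq_abs, Pi.add_apply]
  rw [abs_of_nonneg (by positivity)]
  nlinarith [sq_nonneg (⟪x, c⟫ ^ 2 - ⟪y, c⟫ ^ 2), sq_nonneg (⟪x, c⟫ ^ 2), sq_nonneg (⟪y, c⟫ ^ 2)]

lemma rb_mean (x y : E) : ∫ c, ⟪x, c⟫ * ⟪y, c⟫ ∂(stdGaussian E) = ⟪x, y⟫ := by
  have h := covarianceBilin_apply_eq_cov (μ := stdGaussian E) IsGaussian.memLp_two_id x y
  rw [covarianceBilin_stdGaussian, innerSL_apply_apply, covariance] at h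
  rw [h]
  have h0 : ∀ z : E, ∫ c, ⟪z, c⟫ ∂(stdGaussian E) = 0 := by
    intro z
    simpa using integral_strongDual_stdGaussian (E := E) (innerSL ℝ z)
  simp [h0]

lemma rb_var (x y : E) (hx : ‖x‖ = 1) (hy : ‖y‖ = 1) :
    Var[fun c => ⟪x, c⟫ * ⟪y, c⟫; stdGaussian E] ≤ rbK := by
  refine (variance_le_expectation_sq (by fun_prop)).trans ?_
  have : ∫ c, (⟪x, c⟫ ^ 4 / 2 + ⟪y, c⟫ ^ 4 / 2) ∂(stdGaussian E) = rbK := by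
    rw [integral_add ((rb_int4 x).div_const _) ((rb_int4 y).div_const _), integral_div, integral_div,
      rb_fourth x hx, rb_fourth y hy]
    ring
  rw [← this]
  refine integral_mono_of_nonneg (Filter.Eventually.of_forall fun c => sq_nonneg _)
    (((rb_int4 x).div_const _).add ((rb_int4 y).div_const _)) (Filter.Eventually.of_forall fun c => ?_)
  simp only [Pi.pow_apply]
  nlinarith [sq_nonneg (⟪x, c⟫ ^ 2 - ⟪y, c⟫ ^ 2)]

lemma rb_sum_memLp (d : ℕ) (x y : E) : MemLp (fun G : Fin d → E => ∑ j, ⟪x, G j⟫ * ⟪y, G j⟫) 2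
    (Measure.pi fun _ : Fin d => stdGaussian E) := by
  refine memLp_finsetSum _ fun j _ => ?_
  exact (rb_memLp2 x y).comp_measurePreserving (measurePreserving_eval (fun _ : Fin d => stdGaussian E) j)

lemma rb_sum_second (d : ℕ) (x y : E) (hx : ‖x‖ = 1) (hy : ‖y‖ = 1) :
    Integrable (fun G : Fin d → E => (∑ j, ⟪x, G j⟫ * ⟪y, G j⟫ - d * ⟪x, y⟫) ^ 2)
      (Measure.pi fun _ : Fin d => stdGaussian E) ∧
    ∫ G : Fin d → E, (∑ j, ⟪x, G j⟫ * ⟪y, G j⟫ - d * ⟪x, y⟫) ^ 2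
      ∂(Measure.pi fun _ : Fin d => stdGaussian E) ≤ d * rbK := by
  have hm := rb_sum_memLp d x y
  refine ⟨(hm.sub (memLp_const _)).integrable_sq, ?_⟩
  have hv := variance_sum_pi (μ := fun _ : Fin d => stdGaussian E) (X := fun _ c => ⟪x, c⟫ * ⟪y, c⟫)
    (fun _ => rb_memLp2 x y)
  have hmean : ∫ G : Fin d → E, ∑ j, ⟪x, G j⟫ * ⟪y, G j⟫ ∂(Measure.pi fun _ : Fin d => stdGaussian E) = d * ⟪x, y⟫ := by
    rw [integral_finsetSum]
    · have : ∀ j : Fin d, ∫ G : Fin d → E, ⟪x, G j⟫ * ⟪y, G j⟫ ∂(Measure.pi fun _ : Fin d => stdGaussian E) = ⟪x, y⟫ := by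
        intro j
        rw [← rb_mean x y]
        exact integral_comp_eval (μ := fun _ : Fin d => stdGaussian E) (i := j) (f := fun c => ⟪x, c⟫ * ⟪y, c⟫) (by fun_prop)
      simp [this]
    · intro j _
      exact ((rb_memLp2 x y).comp_measurePreserving (measurePreserving_eval (fun _ : Fin d => stdGaussian E) j)).integrable (by norm_num)
  have hfun : (∑ j : Fin d, fun G : Fin d → E => ⟪x, G j⟫ * ⟪y, G j⟫) = fun G => ∑ j, ⟪x, G j⟫ * ⟪y, G j⟫ := by
    ext G; simp
  rw [hfun, variance_eq_integral hm.aemeasurable, hmean] at hv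
  rw [hv]
  refine (Finset.sum_le_sum fun j _ => rb_var x y hx hy).trans ?_
  simp
end

lemma rb_int_add4 {Ω : Type*} [MeasurableSpace Ω] {μ : Measure Ω} {f₁ f₂ f₃ f₄ : Ω → ℝ}
    (i1 : Integrable f₁ μ) (i2 : Integrable f₂ μ) (i3 : Integrable f₃ μ) (i4 : Integrable f₄ μ) :
    ∫ x, (f₁ x + f₂ x + f₃ x + f₄ x) ∂μ = ∫ x, f₁ x ∂μ + ∫ x, f₂ x ∂μ + ∫ x, f₃ x ∂μ + ∫ x, f₄ x ∂μ := by
  rw [integral_add (f := fun x => f₁ x + f₂ x + f₃ x) ((i1.add i2).add i3) i4,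
    integral_add (f := fun x => f₁ x + f₂ x) (i1.add i2) i3, integral_add i1 i2]

lemma rb_good_aux {ι : Type*} [Fintype ι] [DecidableEq ι] (d : ℕ) (i k : ι) :
    Integrable (fun G : Fin d → EuclideanSpace ℂ ι => ‖∑ j, G j i * star (G j k) - 2 * d * (if i = k then 1 else 0 : ℂ)‖ ^ 2) (rbNu ι d) ∧
    ∫ G : Fin d → EuclideanSpace ℂ ι, ‖∑ j, G j i * star (G j k) - 2 * d * (if i = k then 1 else 0 : ℂ)‖ ^ 2 ∂(rbNu ι d) ≤ 8 * d * rbK := by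
  let R : ι → EuclideanSpace ℂ ι := fun i => EuclideanSpace.single i 1
  let J : ι → EuclideanSpace ℂ ι := fun i => EuclideanSpace.single i Complex.I
  have hR : ∀ i, ‖R i‖ = 1 := by intro i; simp [R]
  have hJ : ∀ i, ‖J i‖ = 1 := by intro i; simp [J]
  have iR : ∀ i (c : EuclideanSpace ℂ ι), inner ℝ (R i) c = (c i).re := by
    intro i c
    rw [PiLp.inner_apply, Finset.sum_eq_single i]
    · simp [R, Complex.inner]
    · intro b _ hb; simp [R, hb]
    · simp
  have iJ : ∀ i (c : EuclideanSpace ℂ ι), inner ℝ (J i) c = (c i).im := by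
    intro i c
    rw [PiLp.inner_apply, Finset.sum_eq_single i]
    · simp [J, Complex.inner]
    · intro b _ hb; simp [J, hb]
    · simp
  have h1 := rb_sum_second d (R i) (R k) (hR i) (hR k)
  have h2 := rb_sum_second d (J i) (J k) (hJ i) (hJ k)
  have h3 := rb_sum_second d (J i) (R k) (hJ i) (hR k)
  have h4 := rb_sum_second d (R i) (J k) (hR i) (hJ k)
  have e1 : inner ℝ (R i) (R k) = if i = k then (1 : ℝ) else 0 := by
    rw [iR]; simp only [R, PiLp.single_apply]; split_ifs <;> simp
  have e2 : inner ℝ (J i) (J k) = if i = k then (1 : ℝ) else 0 := by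
    rw [iJ]; simp only [J, PiLp.single_apply]; split_ifs <;> simp
  have e3 : inner ℝ (J i) (R k) = 0 := by
    rw [iJ]; simp only [R, PiLp.single_apply]; split_ifs <;> simp
  have e4 : inner ℝ (R i) (J k) = 0 := by
    rw [iR]; simp only [J, PiLp.single_apply]; split_ifs <;> simp
  rw [e1] at h1
  rw [e2] at h2
  rw [e3] at h3
  rw [e4] at h4
  simp only [iR, iJ] at h1 h2 h3 h4
  set F : (Fin d → EuclideanSpace ℂ ι) → ℝ := fun G =>
    2 * (∑ j, (G j i).re * (G j k).re - d * (if i = k then (1 : ℝ) else 0)) ^ 2 +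
    2 * (∑ j, (G j i).im * (G j k).im - d * (if i = k then (1 : ℝ) else 0)) ^ 2 +
    2 * (∑ j, (G j i).im * (G j k).re - d * 0) ^ 2 +
    2 * (∑ j, (G j i).re * (G j k).im - d * 0) ^ 2 with hF
  have i1 := h1.1.const_mul 2
  have i2 := h2.1.const_mul 2
  have i3 := h3.1.const_mul 2
  have i4 := h4.1.const_mul 2
  have hFi : Integrable F (rbNu ι d) := ((i1.add i2).add i3).add i4
  have hFI : ∫ G, F G ∂(rbNu ι d) ≤ 8 * d * rbK := by
    rw [hF, rbNu, rb_int_add4 i1 i2 i3 i4,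
      integral_const_mul, integral_const_mul, integral_const_mul, integral_const_mul]
    linarith [h1.2, h2.2, h3.2, h4.2]
  have hle : ∀ G : Fin d → EuclideanSpace ℂ ι, ‖∑ j, G j i * star (G j k) - 2 * d * (if i = k then 1 else 0 : ℂ)‖ ^ 2 ≤ F G := by
    intro G
    rw [← Complex.normSq_eq_norm_sq, Complex.normSq_apply]
    have r : (∑ j, G j i * star (G j k) - 2 * d * (if i = k then 1 else 0 : ℂ)).re =
      (∑ j, (G j i).re * (G j k).re - d * (if i = k then (1 : ℝ) else 0)) + 
      (∑ j, (G j i).im * (G j k).im - d * (if i = k then (1 : ℝ) else 0)) := by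
      rw [Complex.sub_re, Complex.re_sum]
      simp only [Complex.mul_re, Complex.star_def, Complex.conj_re, Complex.conj_im]
      split_ifs <;> simp [Finset.sum_add_distrib] <;> ring
    have s : (∑ j, G j i * star (G j k) - 2 * d * (if i = k then 1 else 0 : ℂ)).im =
      (∑ j, (G j i).im * (G j k).re - d * 0) - (∑ j, (G j i).re * (G j k).im - d * 0) := by
      rw [Complex.sub_im, Complex.im_sum]
      simp only [Complex.mul_im, Complex.star_def, Complex.conj_re, Complex.conj_im]
      split_ifs <;> simp [Finset.sum_add_distrib] <;> ring
    rw [r, s, hF]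
    set a := (∑ j, (G j i).re * (G j k).re - d * (if i = k then (1 : ℝ) else 0))
    set b := (∑ j, (G j i).im * (G j k).im - d * (if i = k then (1 : ℝ) else 0))
    set u := (∑ j, (G j i).im * (G j k).re - d * (0 : ℝ))
    set v := (∑ j, (G j i).re * (G j k).im - d * (0 : ℝ))
    nlinarith [sq_nonneg (a - b), sq_nonneg (u + v)]
  have hint : Integrable (fun G : Fin d → EuclideanSpace ℂ ι => ‖∑ j, G j i * star (G j k) - 2 * d * (if i = k then 1 else 0 : ℂ)‖ ^ 2) (rbNu ι d) := by
    refine Integrable.mono' hFi (Measurable.aestronglyMeasurable (by fun_prop)) (Filter.Eventually.of_forall fun G => ?_)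
    rw [Real.norm_eq_abs, abs_of_nonneg (by positivity)]
    exact hle G
  exact ⟨hint, (integral_mono hint hFi hle).trans hFI⟩

/-- squared Frobenius deviation of the Gram matrix -/
noncomputable def rbDev {ι : Type*} [Fintype ι] [DecidableEq ι] (d : ℕ) (G : Fin d → EuclideanSpace ℂ ι) : ℝ :=
  ∑ i, ∑ k, ‖∑ j, G j i * star (G j k) - 2 * d * (if i = k then 1 else 0 : ℂ)‖ ^ 2

lemma rbDev_meas {ι : Type*} [Fintype ι] [DecidableEq ι] (d : ℕ) : Measurable (rbDev (ι := ι) d) := by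
  unfold rbDev; fun_prop

lemma rb_good {ι : Type*} [Fintype ι] [DecidableEq ι] (d : ℕ) (ε : ℝ) (hε : 0 < ε) (hd : 0 < d)
    (h : 4 * (Fintype.card ι : ℝ) ^ 2 * rbK ≤ d * ε) :
    1 / 2 ≤ (rbNu ι d).real {G | rbDev d G < 4 * d ^ 2 * ε} := by
  have hint : Integrable (rbDev (ι := ι) d) (rbNu ι d) :=
    integrable_finsetSum _ fun i _ => integrable_finsetSum _ fun k _ => (rb_good_aux d i k).1
  have hI : ∫ G, rbDev d G ∂(rbNu ι d) ≤ (Fintype.card ι : ℝ) ^ 2 * (8 * d * rbK) := by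
    unfold rbDev
    rw [integral_finsetSum _ fun i _ => integrable_finsetSum _ fun k _ => (rb_good_aux d i k).1]
    have : ∀ i : ι, ∫ G : Fin d → EuclideanSpace ℂ ι, ∑ k, ‖∑ j, G j i * star (G j k) - 2 * d * (if i = k then 1 else 0 : ℂ)‖ ^ 2 ∂(rbNu ι d) ≤ Fintype.card ι * (8 * d * rbK) := by
      intro i
      rw [integral_finsetSum _ fun k _ => (rb_good_aux d i k).1]
      refine (Finset.sum_le_sum fun k _ => (rb_good_aux d i k).2).trans ?_
      simp
    refine (Finset.sum_le_sum fun i _ => this i).trans ?_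
    simp only [Finset.sum_const, Finset.card_univ, nsmul_eq_mul]
    apply le_of_eq; ring
  have hM := mul_meas_ge_le_integral_of_nonneg (μ := rbNu ι d) (f := rbDev d)
    (Filter.Eventually.of_forall fun G => by unfold rbDev; simp only [Pi.zero_apply]; positivity) hint (4 * d ^ 2 * ε)
  have hc : (rbNu ι d).real {G | rbDev d G < 4 * d ^ 2 * ε} = 1 - (rbNu ι d).real {G | 4 * d ^ 2 * ε ≤ rbDev d G} := by
    rw [← probReal_compl_eq_one_sub (measurableSet_le measurable_const (rbDev_meas d))]
    congr 1
    ext G; simp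
  rw [hc]
  have hd' : (0 : ℝ) < d := by exact_mod_cast hd
  have h5 : 4 * d ^ 2 * ε * (rbNu ι d).real {G | 4 * d ^ 2 * ε ≤ rbDev d G} ≤ 4 * d ^ 2 * ε * (1 / 2) := by
    refine (hM.trans hI).trans ?_
    nlinarith [mul_le_mul_of_nonneg_left h hd'.le]
  have := le_of_mul_le_mul_left h5 (by positivity)
  linarith

lemma rb_perturb {ι : Type*} [Fintype ι] {d : ℕ} (a b : ι → Fin d → ℂ) (w : ι → ℝ) (σ η : ℝ)
    (hσ : 0 < σ) (hη : 0 ≤ η) (hw : ∑ i, w i ^ 2 = σ ^ 2) (hb : ∀ i, ∑ j, ‖b i j‖ ^ 2 = 1)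
    (hab : ∑ i, ∑ j, ‖a i j - b i j‖ ^ 2 ≤ η ^ 2) :
    ∑ j, |∑ i, w i * ‖a i j‖ ^ 2| ≤ ∑ j, |∑ i, w i * ‖b i j‖ ^ 2| + (2 * η + η ^ 2) * σ := by
  have hwi : ∀ i, |w i| ≤ σ := by
    intro i
    apply abs_le_of_sq_le_sq _ hσ.le
    rw [← hw]
    exact Finset.single_le_sum (f := fun i => w i ^ 2) (fun _ _ => sq_nonneg _) (Finset.mem_univ i)
  have h1 : ∀ j, |∑ i, w i * ‖a i j‖ ^ 2| ≤ |∑ i, w i * ‖b i j‖ ^ 2| +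
      ∑ i, (2 * ((|w i| * ‖b i j‖) * ‖a i j - b i j‖) + σ * ‖a i j - b i j‖ ^ 2) := by
    intro j
    have : ∑ i, w i * ‖a i j‖ ^ 2 = ∑ i, w i * ‖b i j‖ ^ 2 + ∑ i, w i * (‖a i j‖ ^ 2 - ‖b i j‖ ^ 2) := by
      rw [← Finset.sum_add_distrib]
      refine Finset.sum_congr rfl fun i _ => by ring
    rw [this]
    refine (abs_add_le _ _).trans (add_le_add le_rfl ?_)
    refine (Finset.abs_sum_le_sum_abs _ _).trans (Finset.sum_le_sum fun i _ => ?_)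
    rw [abs_mul]
    have t1 : |‖a i j‖ ^ 2 - ‖b i j‖ ^ 2| ≤ 2 * ‖b i j‖ * ‖a i j - b i j‖ + ‖a i j - b i j‖ ^ 2 := by
      have n1 := abs_norm_sub_norm_le (a i j) (b i j)
      rw [abs_le] at n1
      have p1 := norm_nonneg (a i j)
      have p2 := norm_nonneg (b i j)
      have p3 := norm_nonneg (a i j - b i j)
      rw [abs_le]
      constructor <;> nlinarith
    have := mul_le_mul_of_nonneg_left t1 (abs_nonneg (w i))
    have t2 := mul_le_mul_of_nonneg_right (hwi i) (sq_nonneg ‖a i j - b i j‖)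
    nlinarith
  refine (Finset.sum_le_sum fun j _ => h1 j).trans ?_
  rw [Finset.sum_add_distrib]
  refine add_le_add le_rfl ?_
  rw [Finset.sum_comm]
  simp_rw [Finset.sum_add_distrib, ← Finset.mul_sum]
  have hcs : ∑ i, ∑ j, (|w i| * ‖b i j‖) * ‖a i j - b i j‖ ≤ σ * η := by
    rw [← Fintype.sum_prod_type' (f := fun i j => (|w i| * ‖b i j‖) * ‖a i j - b i j‖)]
    refine (Real.sum_mul_le_sqrt_mul_sqrt _ _ _).trans ?_
    rw [Fintype.sum_prod_type' (f := fun i j => (|w i| * ‖b i j‖) ^ 2),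
      Fintype.sum_prod_type' (f := fun i j => ‖a i j - b i j‖ ^ 2)]
    refine mul_le_mul ?_ (Real.sqrt_le_iff.2 ⟨hη, hab⟩) (Real.sqrt_nonneg _) hσ.le
    refine Real.sqrt_le_iff.2 ⟨hσ.le, ?_⟩
    simp_rw [mul_pow, sq_abs, ← Finset.mul_sum, hb, mul_one]
    exact hw.le
  nlinarith [mul_le_mul_of_nonneg_left hab hσ.le]

lemma rb_close {ι : Type*} [Fintype ι] [DecidableEq ι] {d : ℕ} (hd : 0 < d) (e : ι ↪ Fin d)
    (ε : ℝ) (hε : ε < 1) (G : Fin d → EuclideanSpace ℂ ι) (hG : rbDev d G < 4 * d ^ 2 * ε) :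
    ∃ U : Matrix.unitaryGroup (Fin d) ℂ,
      ∑ i, ∑ j, ‖((Real.sqrt (2 * d))⁻¹ : ℝ) * G j i - (U : Matrix (Fin d) (Fin d) ℂ) (e i) j‖ ^ 2 ≤ ε := by
  have hd' : (0 : ℝ) < d := by exact_mod_cast hd
  set t : ℝ := (Real.sqrt (2 * d))⁻¹ with ht
  have htt : t * t = 1 / (2 * d) := by
    rw [ht, ← mul_inv, Real.mul_self_sqrt (by positivity), one_div]
  let H : Matrix ι (Fin d) ℂ := Matrix.of fun i j => (t : ℂ) * G j i
  have hH : ∑ i, ∑ k, ‖(H * H.conjTranspose - 1 : Matrix ι ι ℂ) i k‖ ^ 2 ≤ ε := by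
    have e1 : ∀ i k, (H * H.conjTranspose - 1 : Matrix ι ι ℂ) i k =
       ((t * t : ℝ) : ℂ) * (∑ j, G j i * star (G j k) - 2 * d * (if i = k then 1 else 0 : ℂ)) := by
      intro i k
      rw [Matrix.sub_apply, Matrix.mul_apply, Matrix.one_apply, mul_sub]
      congr 1
      · rw [Finset.mul_sum]
        refine Finset.sum_congr rfl fun j _ => ?_
        simp only [H, Matrix.conjTranspose_apply, Matrix.of_apply, star_mul, Complex.star_def, Complex.conj_ofReal]
        push_cast
        ring
      · rw [htt]
        have : (d : ℂ) ≠ 0 := by exact_mod_cast hd.ne'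
        push_cast
        field_simp
    simp_rw [e1, norm_mul, mul_pow, ← Finset.mul_sum]
    rw [Complex.norm_real, Real.norm_eq_abs, sq_abs, htt]
    change (1 / (2 * d)) ^ 2 * rbDev d G ≤ ε
    calc _ ≤ (1 / (2 * d : ℝ)) ^ 2 * (4 * d ^ 2 * ε) := mul_le_mul_of_nonneg_left hG.le (by positivity)
      _ = ε := by field_simp; ring
  obtain ⟨Q, hQ, hHQ⟩ := rb_polar H ε hε hH
  obtain ⟨U, hU⟩ := rb_extend e Q hQ
  refine ⟨U, ?_⟩
  simp_rw [hU]
  exact hHQ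

lemma rb_entry_meas {d : ℕ} [MeasurableSpace (Matrix.unitaryGroup (Fin d) ℂ)]
    [BorelSpace (Matrix.unitaryGroup (Fin d) ℂ)] (k j : Fin d) :
    Measurable (fun V : Matrix.unitaryGroup (Fin d) ℂ => (V : Matrix (Fin d) (Fin d) ℂ) k j) := by
  apply Continuous.measurable
  exact (continuous_subtype_val (p := fun x => x ∈ Matrix.unitaryGroup (Fin d) ℂ)).matrix_elem k j

lemma rb_row_norm {d : ℕ} (V : Matrix.unitaryGroup (Fin d) ℂ) (i : Fin d) :
    ∑ j, ‖(V : Matrix (Fin d) (Fin d) ℂ) i j‖ ^ 2 = 1 := by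
  have := rb_unit_norm V (Pi.single i 1)
  simpa [Pi.single_apply, apply_ite] using this

lemma rb_core {ι : Type*} [Fintype ι] [DecidableEq ι] {d : ℕ} (hd : 0 < d) (e : ι ↪ Fin d)
    (w : ι → ℝ) (σ : ℝ) (hσ : 0 < σ) (hw : ∑ i, w i ^ 2 = σ ^ 2)
    (hcard : 4 * (Fintype.card ι : ℝ) ^ 2 * rbK ≤ d * (1 / 40000))
    [MeasurableSpace (Matrix.unitaryGroup (Fin d) ℂ)]
    [BorelSpace (Matrix.unitaryGroup (Fin d) ℂ)]
    (μ : Measure (Matrix.unitaryGroup (Fin d) ℂ)) [IsProbabilityMeasure μ]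
    (hμ : ∀ U₀ : Matrix.unitaryGroup (Fin d) ℂ, Measure.map (fun U => U₀ * U) μ = μ) :
    MeasurableSet {U : Matrix.unitaryGroup (Fin d) ℂ |
      ∑ j, |∑ i, w i * ‖(U : Matrix (Fin d) (Fin d) ℂ) (e i) j‖ ^ 2| < σ / 64} ∧
    μ.real {U : Matrix.unitaryGroup (Fin d) ℂ |
      ∑ j, |∑ i, w i * ‖(U : Matrix (Fin d) (Fin d) ℂ) (e i) j‖ ^ 2| < σ / 64}
      ≤ 2 * Real.exp (-(d / 16)) := by
  have hd' : (0 : ℝ) < d := by exact_mod_cast hd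
  have hent := fun k j => rb_entry_meas (d := d) k j
  set F := {U : Matrix.unitaryGroup (Fin d) ℂ |
      ∑ j, |∑ i, w i * ‖(U : Matrix (Fin d) (Fin d) ℂ) (e i) j‖ ^ 2| < σ / 64} with hF
  have hFm : MeasurableSet F := by
    refine measurableSet_lt ?_ measurable_const
    refine Finset.measurable_sum _ fun j _ => ?_
    have : Measurable (fun U : Matrix.unitaryGroup (Fin d) ℂ =>
        ∑ i, w i * ‖(U : Matrix (Fin d) (Fin d) ℂ) (e i) j‖ ^ 2) :=
      Finset.measurable_sum _ fun i _ => ((hent (e i) j).norm.pow_const 2).const_mul _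
    exact this.abs
  refine ⟨hFm, ?_⟩
  set A : Set (Fin d → EuclideanSpace ℂ ι) := {G | ∑ j, |∑ i, w i * ‖G j i‖ ^ 2| ≤ d * σ / 16} with hA
  have hAm : MeasurableSet A := measurableSet_le (by fun_prop) measurable_const
  have hactm : Measurable (fun x : Matrix.unitaryGroup (Fin d) ℂ × (Fin d → EuclideanSpace ℂ ι) =>
      rbAct x.1 x.2) := by
    refine measurable_pi_lambda _ fun j => ?_
    unfold rbAct
    refine Finset.measurable_sum _ fun k _ => ?_
    exact ((hent k j).comp measurable_fst).smul ((measurable_pi_apply k).comp measurable_snd)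
  have hactV : ∀ V : Matrix.unitaryGroup (Fin d) ℂ, 
      Measurable (rbAct V : (Fin d → EuclideanSpace ℂ ι) → _) := fun V =>
    hactm.comp measurable_prodMk_left
  set B : Set (Matrix.unitaryGroup (Fin d) ℂ × (Fin d → EuclideanSpace ℂ ι)) :=
    (fun x => rbAct x.1 x.2) ⁻¹' A with hB
  have hBm : MeasurableSet B := hactm hAm
  have h1 : (μ.prod (rbNu ι d)) B = rbNu ι d A := by
    rw [Measure.prod_apply hBm]
    have : ∀ V, rbNu ι d (Prod.mk V ⁻¹' B) = rbNu ι d A := by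
      intro V
      conv_rhs => rw [← rb_invariant V, Measure.map_apply (hactV V) hAm]
      rfl
    simp [this]
  have h2 : μ F * rbNu ι d {G | rbDev d G < 4 * d ^ 2 * (1 / 40000)} ≤ (μ.prod (rbNu ι d)) B := by
    rw [Measure.prod_apply_symm hBm]
    have hgm : MeasurableSet {G : Fin d → EuclideanSpace ℂ ι | rbDev d G < 4 * d ^ 2 * (1 / 40000)} :=
      measurableSet_lt (rbDev_meas d) measurable_const
    rw [← setLIntegral_const]
    refine le_trans ?_ (setLIntegral_le_lintegral {G : Fin d → EuclideanSpace ℂ ι | rbDev d G < 4 * d ^ 2 * (1 / 40000)} _)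
    refine setLIntegral_mono' hgm fun G hG => ?_
    obtain ⟨U, hU⟩ := rb_close hd e (1 / 40000) (by norm_num) G hG
    have hmul : Measurable (fun V : Matrix.unitaryGroup (Fin d) ℂ => U * V) :=
      (continuous_const_mul U).measurable
    have : μ F = μ ((fun V => U * V) ⁻¹' F) := by
      conv_lhs => rw [← hμ U, Measure.map_apply hmul hFm]
    rw [this]
    refine measure_mono fun V hV => ?_
    simp only [Set.mem_preimage, hF, Set.mem_ofPred_eq] at hV
    simp only [Set.mem_preimage, hB, hA, Set.mem_ofPred_eq]
    set t : ℝ := (Real.sqrt (2 * d))⁻¹ with ht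
    have htt : t ^ 2 = 1 / (2 * d) := by
      rw [sq, ht, ← mul_inv, Real.mul_self_sqrt (by positivity), one_div]
    have hp := rb_perturb (fun i j => (t : ℂ) * rbAct V G j i)
      (fun i j => ((U * V : Matrix.unitaryGroup (Fin d) ℂ) : Matrix (Fin d) (Fin d) ℂ) (e i) j)
      w σ (1 / 200) hσ (by norm_num) hw (fun i => rb_row_norm _ _) (by
        refine le_trans (le_of_eq ?_) (hU.trans (by norm_num))
        refine Finset.sum_congr rfl fun i _ => ?_
        rw [← rb_unit_norm V (fun k => (t : ℂ) * G k i - (U : Matrix (Fin d) (Fin d) ℂ) (e i) k)]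
        refine Finset.sum_congr rfl fun j _ => ?_
        congr 2
        rw [rbAct_apply, Finset.mul_sum, Matrix.UnitaryGroup.mul_val, Matrix.mul_apply, ← Finset.sum_sub_distrib]
        refine Finset.sum_congr rfl fun k _ => ?_
        ring)
    have e1 : ∑ j, |∑ i, w i * ‖(t : ℂ) * rbAct V G j i‖ ^ 2| = 1 / (2 * d) * ∑ j, |∑ i, w i * ‖rbAct V G j i‖ ^ 2| := by
      rw [Finset.mul_sum]
      refine Finset.sum_congr rfl fun j _ => ?_
      rw [← abs_of_pos (show (0 : ℝ) < 1 / (2 * d) by positivity), ← abs_mul, Finset.mul_sum]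
      congr 1
      refine Finset.sum_congr rfl fun i _ => ?_
      rw [norm_mul, mul_pow, Complex.norm_real, Real.norm_eq_abs, sq_abs, htt]
      ring
    rw [e1] at hp
    have h3 : 1 / (2 * d) * ∑ j, |∑ i, w i * ‖rbAct V G j i‖ ^ 2| ≤ σ / 32 := by
      refine hp.trans ?_
      nlinarith
    rw [one_div, inv_mul_le_iff₀ (by positivity)] at h3
    linarith
  rw [h1] at h2
  have h3 : μ.real F * (rbNu ι d).real {G | rbDev d G < 4 * d ^ 2 * (1 / 40000)} ≤ (rbNu ι d).real A := by
    have := ENNReal.toReal_mono (measure_ne_top _ _) h2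
    rwa [ENNReal.toReal_mul] at this
  have h4 := rb_good (ι := ι) d (1 / 40000) (by norm_num) hd hcard
  have h5 := rb_chernoff d w σ hσ hw
  have h6 : (0 : ℝ) ≤ μ.real F := measureReal_nonneg
  nlinarith [mul_le_mul_of_nonneg_left h4 h6]


lemma rb_sum_subtype {d : ℕ} (P : Fin d → Prop) [DecidablePred P] (f : Fin d → ℝ)
    (hf : ∀ i, ¬ P i → f i = 0) : ∑ i : {i // P i}, f i = ∑ i, f i := by
  rw [← Finset.sum_subtype (Finset.univ.filter P) (by simp) f, Finset.sum_filter]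
  refine Finset.sum_congr rfl fun i _ => ?_
  split_ifs with h
  · rfl
  · exact (hf i h).symm

lemma rb_ab {a b σ : ℝ} (ha : 0 < a) (hb : 0 < b) (hσ : 0 < σ) (h : a ^ 2 + b ^ 2 ≤ σ ^ 2) :
    a + b ≤ 2 * σ := by
  by_contra hc
  push Not at hc
  nlinarith [sq_nonneg (a - b)]

lemma rb_weights (p q r d : ℕ) (hp : 1 ≤ p) (hq : 1 ≤ q) (hr : 1 ≤ r) (hpqr : p + q + r ≤ d) :
    (Real.sqrt p / ((p : ℝ) + r)) ^ 2 + (Real.sqrt q / ((q : ℝ) + r)) ^ 2 ≤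
    ∑ i : Fin d, ((1 / ((p : ℝ) + r)) * ((if (i : ℕ) < p then 1 else 0) +
      (if p + q ≤ (i : ℕ) ∧ (i : ℕ) < p + q + r then 1 else 0)) -
    (1 / ((q : ℝ) + r)) * ((if p ≤ (i : ℕ) ∧ (i : ℕ) < p + q then 1 else 0) +
      (if p + q ≤ (i : ℕ) ∧ (i : ℕ) < p + q + r then 1 else 0))) ^ 2 := by
  have h1 : ∀ i : Fin d, (if (i : ℕ) < p then (1 / ((p : ℝ) + r)) ^ 2 else 0) +
      (if p ≤ (i : ℕ) ∧ (i : ℕ) < p + q then (1 / ((q : ℝ) + r)) ^ 2 else 0) ≤ 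
      ((1 / ((p : ℝ) + r)) * ((if (i : ℕ) < p then 1 else 0) +
      (if p + q ≤ (i : ℕ) ∧ (i : ℕ) < p + q + r then 1 else 0)) -
    (1 / ((q : ℝ) + r)) * ((if p ≤ (i : ℕ) ∧ (i : ℕ) < p + q then 1 else 0) +
      (if p + q ≤ (i : ℕ) ∧ (i : ℕ) < p + q + r then 1 else 0))) ^ 2 := by
    intro i
    by_cases h1 : (i : ℕ) < p
    · rw [if_pos h1, if_neg (by omega), if_pos h1, if_neg (by omega), if_neg (by omega)]
      simp
    · by_cases h2 : (i : ℕ) < p + q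
      · rw [if_neg h1, if_pos (by omega), if_neg h1, if_neg (by omega), if_pos (by omega)]
        simp
      · rw [if_neg h1, if_neg (by omega)]
        simp only [add_zero]
        positivity
  refine le_trans (le_of_eq ?_) (Finset.sum_le_sum fun i _ => h1 i)
  rw [Finset.sum_add_distrib, ← Finset.sum_filter, ← Finset.sum_filter, Finset.sum_const,
    Finset.sum_const]
  have k1 : (Finset.univ.filter (fun i : Fin d => (i : ℕ) < p)).card = p := by
    rw [Fin.card_filter_val_lt]; omega
  have k2 : (Finset.univ.filter (fun i : Fin d => p ≤ (i : ℕ) ∧ (i : ℕ) < p + q)).card = q := by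
    have k3 : (Finset.univ.filter (fun i : Fin d => (i : ℕ) < p + q)).card = p + q := by
      rw [Fin.card_filter_val_lt]; omega
    have k4 : (Finset.univ.filter (fun i : Fin d => (i : ℕ) < p + q)) =
        (Finset.univ.filter (fun i : Fin d => (i : ℕ) < p)) ∪
        (Finset.univ.filter (fun i : Fin d => p ≤ (i : ℕ) ∧ (i : ℕ) < p + q)) := by
      ext i; simp; omega
    rw [k4, Finset.card_union_of_disjoint, k1] at k3
    · omega
    · rw [Finset.disjoint_filter]; intro i _ hi; omega
  rw [k1, k2, div_pow, div_pow, Real.sq_sqrt (by positivity), Real.sq_sqrt (by positivity)]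
  simp only [nsmul_eq_mul, div_pow, one_pow, mul_one_div]

end RbAux

set_option maxHeartbeats 1000000 in

/-- There are constants `c₁, c₂, c₃ > 0` such that for all integers
`p, q, r ≥ 1` and `d ≥ m := p + q + r` with `α := c₁·d/m³ − 2·log m ≥ 1`, the following
holds. Let `U` be a Haar-random `d×d` unitary (distributed according to the unique
left-invariant probability measure on `U(d)`), and define the probability vectors
`S_j := (1/(p+r))(∑_{i<p} |U_{ij}|² + ∑_{p+q≤i<m} |U_{ij}|²)` and
`T_j := (1/(q+r))(∑_{p≤i<p+q} |U_{ij}|² + ∑_{p+q≤i<m} |U_{ij}|²)`. Then with probability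
at least `1 − exp(−c₃·α)`, one has `∑_j |S_j − T_j| ≥ c₂·(√p/(p+r) + √q/(q+r))`. -/
theorem random_basis_two_blocks_distinguishable :
    ∃ c₁ c₂ c₃ : ℝ, 0 < c₁ ∧ 0 < c₂ ∧ 0 < c₃ ∧
      ∀ (p q r d : ℕ), 1 ≤ p → 1 ≤ q → 1 ≤ r → p + q + r ≤ d →
        ∀ α : ℝ,
          α = c₁ * d / ((p : ℝ) + q + r) ^ 3 - 2 * Real.log ((p : ℝ) + q + r) →
          1 ≤ α →
          ∀ [MeasurableSpace (Matrix.unitaryGroup (Fin d) ℂ)]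
            [BorelSpace (Matrix.unitaryGroup (Fin d) ℂ)]
            (μ : Measure (Matrix.unitaryGroup (Fin d) ℂ)),
            IsProbabilityMeasure μ →
            (∀ U₀ : Matrix.unitaryGroup (Fin d) ℂ,
              Measure.map (fun U => U₀ * U) μ = μ) →
            1 - Real.exp (-(c₃ * α)) ≤
              (μ {U : Matrix.unitaryGroup (Fin d) ℂ |
                  c₂ * (Real.sqrt p / ((p : ℝ) + r) + Real.sqrt q / ((q : ℝ) + r)) ≤
                    ∑ j : Fin d,
                      |(1 / ((p : ℝ) + r)) *
                          ((∑ i ∈ Finset.univ.filter (fun i : Fin d => (i : ℕ) < p),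
                              ‖(U : Matrix (Fin d) (Fin d) ℂ) i j‖ ^ 2) +
                            ∑ i ∈ Finset.univ.filter
                                (fun i : Fin d => p + q ≤ (i : ℕ) ∧ (i : ℕ) < p + q + r),
                              ‖(U : Matrix (Fin d) (Fin d) ℂ) i j‖ ^ 2) -
                        (1 / ((q : ℝ) + r)) *
                          ((∑ i ∈ Finset.univ.filter
                                (fun i : Fin d => p ≤ (i : ℕ) ∧ (i : ℕ) < p + q),
                              ‖(U : Matrix (Fin d) (Fin d) ℂ) i j‖ ^ 2) +
                            ∑ i ∈ Finset.univ.filter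
                                (fun i : Fin d => p + q ≤ (i : ℕ) ∧ (i : ℕ) < p + q + r),
                              ‖(U : Matrix (Fin d) (Fin d) ℂ) i j‖ ^ 2)|}).toReal := by
  refine ⟨1 / 40000 / (4 * rbK + 1), 1 / 128, 1 / 32, ?_, by norm_num, by norm_num, ?_⟩
  · have := rbK_nonneg; positivity
  intro p q r d hp hq hr hmd α hα hα1 _ _ μ hprob hμ
  have hK := rbK_nonneg
  set c₁ : ℝ := 1 / 40000 / (4 * rbK + 1) with hc₁
  have hp' : (1 : ℝ) ≤ p := by exact_mod_cast hp
  have hq' : (1 : ℝ) ≤ q := by exact_mod_cast hq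
  have hr' : (1 : ℝ) ≤ r := by exact_mod_cast hr
  set m : ℝ := (p : ℝ) + q + r with hm
  have hm3 : 3 ≤ m := by linarith
  have hlog : 0 ≤ Real.log m := Real.log_nonneg (by linarith)
  have hc₁pos : 0 < c₁ := by positivity
  have hc₁le : c₁ * (4 * rbK + 1) = 1 / 40000 := by rw [hc₁]; field_simp
  have hα2 : α ≤ c₁ * d / m ^ 3 := by linarith
  have hdpos : 0 < d := by omega
  have hd' : (0 : ℝ) < d := by exact_mod_cast hdpos
  have hm3' : m ^ 3 ≤ c₁ * d := by
    have h1 : 1 ≤ c₁ * d / m ^ 3 := by linarith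
    rwa [le_div_iff₀ (by positivity), one_mul] at h1
  have hm2 : m ^ 2 ≤ c₁ * d := le_trans (by nlinarith [sq_nonneg m]) hm3'
  have hc₁1 : c₁ ≤ 1 / 40000 := by nlinarith
  have hdbig : 40000 ≤ (d : ℝ) := by nlinarith [sq_nonneg (m - 3)]
  have hαd : α ≤ d := by
    refine hα2.trans ?_
    rw [div_le_iff₀ (by positivity)]
    have : 1 ≤ m ^ 3 := one_le_pow₀ (by linarith)
    nlinarith
  have hcard : 4 * m ^ 2 * rbK ≤ d * (1 / 40000) := by
    have h1 := mul_le_mul_of_nonneg_right hm2 (by positivity : 0 ≤ 4 * rbK)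
    have h2 : c₁ * (4 * rbK) ≤ 1 / 40000 := by linarith
    nlinarith [mul_le_mul_of_nonneg_left h2 hd'.le]
  -- weights
  let W : Fin d → ℝ := fun i => (1 / ((p : ℝ) + r)) * ((if (i : ℕ) < p then 1 else 0) +
      (if p + q ≤ (i : ℕ) ∧ (i : ℕ) < p + q + r then 1 else 0)) -
    (1 / ((q : ℝ) + r)) * ((if p ≤ (i : ℕ) ∧ (i : ℕ) < p + q then 1 else 0) +
      (if p + q ≤ (i : ℕ) ∧ (i : ℕ) < p + q + r then 1 else 0))
  let P : Fin d → Prop := fun i => (i : ℕ) < p + q + r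
  have hW0 : ∀ i, ¬ P i → W i = 0 := by
    intro i hi
    simp only [P] at hi
    simp only [W]
    rw [if_neg (by omega), if_neg (by omega), if_neg (by omega)]
    simp
  have hsub := fun f hf => rb_sum_subtype (d := d) P f hf
  have hcardι : (Fintype.card {i // P i} : ℝ) = m := by
    rw [hm, Fintype.card_subtype]
    have : (Finset.univ.filter P).card = p + q + r := by
      rw [Fin.card_filter_val_lt]; omega
    rw [this]; push_cast; ring
  set σ : ℝ := Real.sqrt (∑ i : {i // P i}, W i ^ 2) with hσ
  have hσ2 : ∑ i : {i // P i}, W i ^ 2 = σ ^ 2 := by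
    rw [hσ, Real.sq_sqrt (by positivity)]
  set a : ℝ := Real.sqrt p / ((p : ℝ) + r) with ha
  set b : ℝ := Real.sqrt q / ((q : ℝ) + r) with hb
  have hapos : 0 < a := by
    have := Real.sqrt_pos.2 (by linarith : (0 : ℝ) < p)
    positivity
  have hbpos : 0 < b := by
    have := Real.sqrt_pos.2 (by linarith : (0 : ℝ) < q)
    positivity
  have hab : a ^ 2 + b ^ 2 ≤ σ ^ 2 := by
    rw [← hσ2, hsub (fun i => W i ^ 2) (fun i hi => by simp [hW0 i hi])]
    exact rb_weights p q r d hp hq hr hmd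
  have hσpos : 0 < σ := by
    refine lt_of_le_of_ne (Real.sqrt_nonneg _) fun h => ?_
    rw [← h] at hab
    nlinarith
  have hab2 : a + b ≤ 2 * σ := by
    exact rb_ab hapos hbpos hσpos hab
  obtain ⟨hFm, hF⟩ := rb_core hdpos (Function.Embedding.subtype P) (fun i => W i) σ hσpos hσ2
    (by rw [hcardι]; exact hcard) μ hμ
  have hc := probReal_compl_eq_one_sub (μ := μ) hFm
  have hexp : 2 * Real.exp (-((d : ℝ) / 16)) ≤ Real.exp (-(1 / 32 * α)) := by
    have h1 : (2 : ℝ) ≤ Real.exp (d / 32) := by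
      have := Real.add_one_le_exp ((d : ℝ) / 32); linarith
    calc 2 * Real.exp (-((d : ℝ) / 16)) ≤ Real.exp (d / 32) * Real.exp (-((d : ℝ) / 16)) :=
          mul_le_mul_of_nonneg_right h1 (Real.exp_pos _).le
      _ = Real.exp (-(d / 32)) := by rw [← Real.exp_add]; congr 1; ring
      _ ≤ _ := Real.exp_le_exp.2 (by linarith)
  refine le_trans (by linarith) (le_trans (le_of_eq hc.symm) (measureReal_mono ?_))
  intro U hU
  simp only [Set.mem_compl_iff, Set.mem_ofPred_eq, not_lt] at hU ⊢
  refine le_trans (by linarith : 1 / 128 * (a + b) ≤ σ / 64) (hU.trans (le_of_eq ?_))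
  refine Finset.sum_congr rfl fun j _ => ?_
  congr 1
  refine (rb_sum_subtype P (fun i : Fin d => W i * ‖(U : Matrix (Fin d) (Fin d) ℂ) i j‖ ^ 2)
    (fun i hi => by simp [hW0 i hi])).trans ?_
  rw [Finset.sum_filter, Finset.sum_filter, Finset.sum_filter, ← Finset.sum_add_distrib,
    ← Finset.sum_add_distrib, Finset.mul_sum, Finset.mul_sum, ← Finset.sum_sub_distrib]
  refine Finset.sum_congr rfl fun i _ => ?_
  simp only [W]
  split_ifs <;> ring
end
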